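/- arXiv:2411.18904 — 8 statements merged into one kernel-verified Lean document; each statement's English description precedes it below -/
import Mathlib

section
/- Assume each P(x_i,x_j) has zero constant term. If φ, ψ ∈ R are nonzero polynomials and there exists λ ∈ ℂ with P(φ,ψ) = λ·φ·ψ, then P₀(φ^low, ψ^low) = 0. -/
/-!
The proof filters `ℂ[x₁,…,x_n]` by the powers of the ideal `𝔪 = (x₁,…,x_n)`; membership in `𝔪 ^ d`
means that all terms of degree less than `d` vanish. A biderivation is determined by its values on
generators, `P(φ,ψ) = ∑ ∂ᵢφ ∂ⱼψ P(xᵢ,xⱼ)` (`bracket_eq_sum`). Let `a = ord φ`, `b = ord ψ`.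
If `a = 0` or `b = 0`, one of the lowest terms is constant and its derivatives vanish.
Otherwise each of the factors `∂ᵢφ`, `∂ⱼψ`, `P(xᵢ,xⱼ)` agrees with `∂ᵢφ^low`, `∂ⱼψ^low`, `Lᵢⱼ`
modulo one more power of `𝔪` than the one it lies in, so that
`P(φ,ψ) ≡ P₀(φ^low,ψ^low)` modulo `𝔪 ^ (a + b)`. As `P(φ,ψ) = λφψ` lies in `𝔪 ^ (a + b)`, so does
`P₀(φ^low,ψ^low)`; being homogeneous of degree `a + b - 1`, it is zero.
-/

open MvPolynomial

/-- The order of a polynomial: the minimal total degree of a nonzero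
homogeneous component. -/
noncomputable def mvOrd {σ : Type*} (f : MvPolynomial σ ℂ) : ℕ :=
  sInf {d : ℕ | MvPolynomial.homogeneousComponent d f ≠ 0}

/-- The lowest degree term of a polynomial: its nonzero homogeneous component
of minimal total degree. -/
noncomputable def mvLow {σ : Type*} (f : MvPolynomial σ ℂ) : MvPolynomial σ ℂ :=
  MvPolynomial.homogeneousComponent (mvOrd f) f

/-- A biderivation of a polynomial ring is determined by its values on pairs of variables. -/
lemma bracket_eq_sum {n : ℕ}
    (P : MvPolynomial (Fin n) ℂ → MvPolynomial (Fin n) ℂ → MvPolynomial (Fin n) ℂ)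
    (hadd : ∀ a b c, P (a + b) c = P a c + P b c)
    (hsmul : ∀ (r : ℂ) (a b), P (r • a) b = r • P a b)
    (hskew : ∀ a b, P a b = - P b a)
    (hleib : ∀ a b c, P (a * b) c = a * P b c + b * P a c)
    (f g : MvPolynomial (Fin n) ℂ) :
    P f g = ∑ i, ∑ j, pderiv i f * pderiv j g * P (X i) (X j) := by
  have one_arg : ∀ f c, P f c = ∑ i, pderiv i f * P (X i) c := by
    intro f c
    let D : Derivation ℂ (MvPolynomial (Fin n) ℂ) (MvPolynomial (Fin n) ℂ) :=
      Derivation.mk' { toFun := fun a => P a c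
                       map_add' := fun a b => hadd a b c
                       map_smul' := fun r a => hsmul r a c }
        (fun a b => hleib a b c)
    have hsum : ∀ a, (∑ i, P (X i) c • pderiv i : Derivation ℂ (MvPolynomial (Fin n) ℂ) _) a =
        ∑ i, P (X i) c • pderiv i a := by
      intro a
      have h := congrFun (map_sum (Derivation.coeFnAddMonoidHom (R := ℂ)
        (A := MvPolynomial (Fin n) ℂ) (M := MvPolynomial (Fin n) ℂ))
        (fun i => P (X i) c • pderiv i) Finset.univ) a
      rw [Finset.sum_apply] at h
      exact h
    have hD : D = ∑ i, P (X i) c • pderiv i := by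
      refine derivation_ext fun k => ?_
      have hk : D (X k) = P (X k) c := rfl
      rw [hk, hsum]
      simp [pderiv_X, Pi.single_apply]
    have hf : D f = P f c := rfl
    rw [← hf, hD, hsum]
    simp [mul_comm]
  rw [one_arg f g]
  refine Finset.sum_congr rfl fun i _ => ?_
  rw [hskew (X i) g, one_arg g (X i), ← Finset.sum_neg_distrib, Finset.mul_sum]
  refine Finset.sum_congr rfl fun j _ => ?_
  rw [hskew (X j) (X i)]
  ring

lemma mem_pow_mvOrd {σ : Type*} (f : MvPolynomial σ ℂ) : f ∈ idealOfVars σ ℂ ^ mvOrd f := by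
  rw [mem_pow_idealOfVars_iff']
  intro x hx
  have h : homogeneousComponent x.degree f = 0 := by
    simpa using Nat.notMem_of_lt_sInf hx
  simpa [coeff_homogeneousComponent] using congrArg (coeff x) h

/-- Removing the component of degree `d` from an element of `𝔪 ^ d` leaves an element of
`𝔪 ^ (d + 1)`. -/
lemma sub_homogeneousComponent_mem {σ : Type*} {d : ℕ} {f : MvPolynomial σ ℂ}
    (hf : f ∈ idealOfVars σ ℂ ^ d) :
    f - homogeneousComponent d f ∈ idealOfVars σ ℂ ^ (d + 1) := by
  rw [mem_pow_idealOfVars_iff'] at hf ⊢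
  intro x hx
  rw [coeff_sub, coeff_homogeneousComponent]
  split_ifs with h
  · simp
  · rw [hf x (by omega), sub_zero]

lemma mem_pow_of_isHomogeneous {σ : Type*} {d : ℕ} {f : MvPolynomial σ ℂ}
    (hf : f.IsHomogeneous d) : f ∈ idealOfVars σ ℂ ^ d := by
  rw [mem_pow_idealOfVars_iff']
  intro x hx
  exact hf.coeff_eq_zero hx.ne

lemma pderiv_mem_pow {σ : Type*} {d : ℕ} {f : MvPolynomial σ ℂ} (i : σ)
    (hf : f ∈ idealOfVars σ ℂ ^ (d + 1)) : pderiv i f ∈ idealOfVars σ ℂ ^ d := by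
  rw [mem_pow_idealOfVars_iff'] at hf ⊢
  intro x hx
  rw [coeff_pderiv, hf _ (by simpa using hx), zero_mul]

lemma pderiv_mvLow_eq_zero {σ : Type*} {f : MvPolynomial σ ℂ} (h : mvOrd f = 0) (i : σ) :
    pderiv i (mvLow f) = 0 := by
  rw [mvLow, h, homogeneousComponent_zero, pderiv_C]

/-- A product of three factors is unchanged to leading order when each factor is replaced by its
leading part. -/
lemma mul_sub_mul_mem {R : Type*} [CommRing R] {I : Ideal R} {a b c : ℕ} {u u' v v' w w' : R}
    (hu' : u' ∈ I ^ a) (hv : v ∈ I ^ b) (hv' : v' ∈ I ^ b) (hw : w ∈ I ^ c)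
    (hu : u - u' ∈ I ^ (a + 1)) (hvv : v - v' ∈ I ^ (b + 1)) (hww : w - w' ∈ I ^ (c + 1)) :
    u * v * w - u' * v' * w' ∈ I ^ (a + b + c + 1) := by
  have h1 := Ideal.mul_mem_mul (Ideal.mul_mem_mul hu hv) hw
  have h2 := Ideal.mul_mem_mul (Ideal.mul_mem_mul hu' hvv) hw
  have h3 := Ideal.mul_mem_mul (Ideal.mul_mem_mul hu' hv') hww
  simp only [← pow_add] at h1 h2 h3
  rw [show a + 1 + b + c = a + b + c + 1 by ring] at h1
  rw [show a + (b + 1) + c = a + b + c + 1 by ring] at h2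
  rw [show a + b + (c + 1) = a + b + c + 1 by ring] at h3
  convert Ideal.add_mem _ (Ideal.add_mem _ h1 h2) h3 using 1
  ring

/-- for a Poisson-type bracket `P` on `ℂ[x₁,…,x_n]` whose
brackets of generators have zero constant term, if `P(φ,ψ) = λ·φ·ψ` then
the linearized bracket of the lowest degree terms vanishes:
`P₀(φ^low, ψ^low) = Σ_{i,j} ∂(φ^low)/∂x_i · ∂(ψ^low)/∂x_j · L_{ij} = 0`,
where `L_{ij}` is the degree-1 homogeneous component of `P(x_i,x_j)`. -/
theorem log_canonical_pair_linearized_involutive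
    (n : ℕ)
    (P : MvPolynomial (Fin n) ℂ → MvPolynomial (Fin n) ℂ → MvPolynomial (Fin n) ℂ)
    (hadd : ∀ a b c, P (a + b) c = P a c + P b c)
    (hsmul : ∀ (r : ℂ) (a b), P (r • a) b = r • P a b)
    (hskew : ∀ a b, P a b = - P b a)
    (hleib : ∀ a b c, P (a * b) c = a * P b c + b * P a c)
    (hconst : ∀ i j, constantCoeff (P (X i) (X j)) = 0)
    (φ ψ : MvPolynomial (Fin n) ℂ) (hφ : φ ≠ 0) (hψ : ψ ≠ 0)
    (lam : ℂ) (hlam : P φ ψ = C lam * φ * ψ) :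
    ∑ i : Fin n, ∑ j : Fin n,
      pderiv i (mvLow φ) * pderiv j (mvLow ψ) *
        homogeneousComponent 1 (P (X i) (X j)) = 0 := by
  rcases Nat.eq_zero_or_pos (mvOrd φ) with ha | ha
  · simp [pderiv_mvLow_eq_zero ha]
  rcases Nat.eq_zero_or_pos (mvOrd ψ) with hb | hb
  · simp [pderiv_mvLow_eq_zero hb]
  obtain ⟨a, ha⟩ := Nat.exists_eq_add_of_le' ha
  obtain ⟨b, hb⟩ := Nat.exists_eq_add_of_le' hb
  have hlowφ : (mvLow φ).IsHomogeneous (a + 1) :=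
    ha ▸ homogeneousComponent_isHomogeneous _ _
  have hlowψ : (mvLow ψ).IsHomogeneous (b + 1) :=
    hb ▸ homogeneousComponent_isHomogeneous _ _
  have hφm := mem_pow_mvOrd φ
  have hψm := mem_pow_mvOrd ψ
  have hφs : φ - mvLow φ ∈ idealOfVars (Fin n) ℂ ^ (a + 1 + 1) :=
    ha ▸ sub_homogeneousComponent_mem hφm
  have hψs : ψ - mvLow ψ ∈ idealOfVars (Fin n) ℂ ^ (b + 1 + 1) :=
    hb ▸ sub_homogeneousComponent_mem hψm
  rw [ha] at hφm
  rw [hb] at hψm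
  have hPm : ∀ i j, P (X i) (X j) ∈ idealOfVars (Fin n) ℂ ^ 1 := by
    intro i j
    rw [mem_pow_idealOfVars_iff']
    intro x hx
    obtain rfl : x = 0 := by simpa [Finsupp.degree_eq_zero_iff] using hx
    exact hconst i j
  set S := ∑ i : Fin n, ∑ j : Fin n,
      pderiv i (mvLow φ) * pderiv j (mvLow ψ) * homogeneousComponent 1 (P (X i) (X j)) with hS
  have hom : S.IsHomogeneous (a + b + 1) := by
    refine IsHomogeneous.sum _ _ _ fun i _ => IsHomogeneous.sum _ _ _ fun j _ => ?_
    exact (hlowφ.pderiv.mul hlowψ.pderiv).mul (homogeneousComponent_isHomogeneous _ _)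
  have hdiff : P φ ψ - S ∈ idealOfVars (Fin n) ℂ ^ (a + b + 1 + 1) := by
    rw [bracket_eq_sum P hadd hsmul hskew hleib, hS, ← Finset.sum_sub_distrib]
    refine Ideal.sum_mem _ fun i _ => ?_
    rw [← Finset.sum_sub_distrib]
    refine Ideal.sum_mem _ fun j _ => ?_
    refine mul_sub_mul_mem (pderiv_mem_pow i (mem_pow_of_isHomogeneous hlowφ)) (pderiv_mem_pow j hψm)
      (pderiv_mem_pow j (mem_pow_of_isHomogeneous hlowψ)) (hPm i j) ?_ ?_
      (sub_homogeneousComponent_mem (hPm i j))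
    · rw [← map_sub]
      exact pderiv_mem_pow i hφs
    · rw [← map_sub]
      exact pderiv_mem_pow j hψs
  have hPφψ : P φ ψ ∈ idealOfVars (Fin n) ℂ ^ (a + b + 1 + 1) := by
    rw [hlam, mul_assoc]
    have h := Ideal.mul_mem_mul hφm hψm
    rw [← pow_add, show a + 1 + (b + 1) = a + b + 1 + 1 by ring] at h
    exact Ideal.mul_mem_left _ _ h
  have hSm : S ∈ idealOfVars (Fin n) ℂ ^ (a + b + 1 + 1) := by
    simpa using Ideal.sub_mem _ hPφψ hdiff
  rw [mem_pow_idealOfVars_iff'] at hSm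
  ext x
  rw [coeff_zero]
  by_cases hx : x.degree = a + b + 1
  · exact hSm x (by omega)
  · exact hom.coeff_eq_zero hx
end

section
/- Let φ₁,…,φ_n ∈ ℂ[x₁,…,x_n] be polynomials such that the Jacobian determinant D = det((∂φ_i/∂x_j)_{i,j}) is nonzero. Let d = ord(D) and d_i = ord(φ_i) for each i. Then the n×n matrix K with (i,j) entry ∂(φ_i^low)/∂x_j, regarded as a matrix over the field of fractions ℂ(x₁,…,x_n), has rank at least d₁ + ⋯ + d_n − d. -/
/-!
Write `J` for the Jacobian matrix, `D = det J`, and let `t` be a new variable. Substituting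
`x ↦ t x` turns homogeneous components into coefficients of powers of `t` (`coeff_scale`), so row
`i` of `t J(t x)` is `t ^ dᵢ` times row `i` of `K + t R` for some polynomial matrix `R`
(`scale_pderiv`). Taking determinants, `t ^ n D(t x) = t ^ (d₁ + ⋯ + dₙ) det (K + t R)`.
The left side has order exactly `n + d` in `t`. Over the fraction field, `det (K + t R)` is
divisible by `t ^ (n - rank K)` (`X_pow_dvd_det`), so `d₁ + ⋯ + dₙ + n - rank K ≤ n + d`.
-/

open MvPolynomial

/-- A pencil `K + t R` whose constant term has corank `k` has determinant divisible by `t ^ k`: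
in a basis adapted to `ker K`, `k` of its columns are divisible by `t`. -/
theorem X_pow_dvd_det {F : Type*} [Field F] {n : ℕ} (K : Matrix (Fin n) (Fin n) F)
    (R : Matrix (Fin n) (Fin n) (Polynomial F)) :
    (Polynomial.X : Polynomial F) ^ (n - K.rank) ∣ (K.map Polynomial.C +
          (Polynomial.X : Polynomial F) • R).det := by
  classical
  obtain ⟨e⟩ : Nonempty (Fin (Module.finrank F (LinearMap.ker K.mulVecLin)) ⊕
      Fin (Module.finrank F ((Fin n → F) ⧸ LinearMap.ker K.mulVecLin)) ≃ Fin n) := by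
    rw [← Fintype.card_eq]
    have := (LinearMap.ker K.mulVecLin).finrank_quotient_add_finrank
    simp at this ⊢
    omega
  have hk : Module.finrank F (LinearMap.ker K.mulVecLin) = n - K.rank := by
    have := K.mulVecLin.finrank_range_add_finrank_ker
    simp at this
    rw [Matrix.rank]
    omega
  set b := ((Module.finBasis F (LinearMap.ker K.mulVecLin)).sumQuot
    (Module.finBasis F ((Fin n → F) ⧸ LinearMap.ker K.mulVecLin))).reindex e with hb
  set Q : Matrix (Fin n) (Fin n) F := (Pi.basisFun F (Fin n)).toMatrix b with hQ
  have hQcol : ∀ i j, Q i j = b j i := fun i j => by simp [hQ, Module.Basis.toMatrix_apply]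
  have hker : ∀ k i, (K * Q) i (e (Sum.inl k)) = 0 := by
    intro k i
    have h1 : b (e (Sum.inl k)) = (Module.finBasis F (LinearMap.ker K.mulVecLin) k : Fin n → F) := by
      simp [hb]
    have h2 : K.mulVecLin (b (e (Sum.inl k))) = 0 := by
      rw [h1]; exact (Module.finBasis F (LinearMap.ker K.mulVecLin) k).2
    have h3 := congrFun h2 i
    simpa [Matrix.mul_apply, Matrix.mulVec, dotProduct, hQcol] using h3
  have hQdet : IsUnit (Q.map Polynomial.C).det := by
    have h0 : IsUnit Q.det := by
      have := (Pi.basisFun F (Fin n)).invertibleToMatrix b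
      exact Matrix.isUnit_det_of_invertible Q
    have h1 := h0.map (Polynomial.C : F →+* (Polynomial F))
    rwa [RingHom.map_det] at h1
  rw [← hQdet.dvd_mul_right, ← Matrix.det_mul]
  -- Each column of the product that comes from the kernel is divisible by `Polynomial.X`.
  set M : Matrix (Fin n) (Fin n) (Polynomial F) := (K.map Polynomial.C +
          (Polynomial.X : Polynomial F) • R) * Q.map Polynomial.C with hM
  let v : Fin n → (Polynomial F) := fun j => Sum.elim (fun _ => Polynomial.X) (fun _ => 1) (e.symm j)
  let A : Matrix (Fin n) (Fin n) (Polynomial F) := Matrix.of fun i j =>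
    Sum.elim (fun _ => (R * Q.map Polynomial.C : Matrix (Fin n) (Fin n) (Polynomial F)) i j)
      (fun _ => M i j) (e.symm j)
  have key : M = Matrix.of fun i j => v j * A i j := by
    ext1 i j
    obtain ⟨s, rfl⟩ := e.surjective j
    rcases s with k | k
    · have h : (K.map Polynomial.C * Q.map Polynomial.C) i (e (Sum.inl k)) = 0 := by
        rw [← Matrix.map_mul, Matrix.map_apply, hker, map_zero]
      simp [v, A, hM, add_mul, h]
    · simp [v, A]
  rw [key, Matrix.det_mul_row]
  refine Dvd.dvd.mul_right ?_ _
  rw [← e.prod_comp, Fintype.prod_sum_type]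
  simp [v, hk]

theorem homogeneousComponent_pderiv {σ : Type*} (m : ℕ) (j : σ) (f : MvPolynomial σ ℂ) :
    homogeneousComponent m (pderiv j f) = pderiv j (homogeneousComponent (m + 1) f) := by
  classical
  have hmon : ∀ (k : ℕ) (s : σ →₀ ℕ) (a : ℂ), homogeneousComponent k (monomial s a) =
      if s.degree = k then monomial s a else 0 := fun k s a => by
    rw [homogeneousComponent_of_mem (n := s.degree) (isHomogeneous_monomial a rfl)]
    simp [eq_comm]
  induction f using MvPolynomial.induction_on' with
  | add p q hp hq => simp [hp, hq]
  | monomial s a =>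
    rw [pderiv_monomial, hmon, hmon]
    by_cases hs : s j = 0
    · split_ifs <;> simp [pderiv_monomial, hs]
    · have h : (s - Finsupp.single j 1).degree + 1 = s.degree := by
        have hle : Finsupp.single j 1 ≤ s := by simpa using Nat.one_le_iff_ne_zero.2 hs
        conv_rhs => rw [← tsub_add_cancel_of_le hle, map_add, Finsupp.degree_single]
      rw [← h]
      simp only [add_left_inj]
      split_ifs <;> simp [pderiv_monomial]

/-- The substitution `f(x) ↦ f(t x)` into polynomials in `t` over `ℂ[x]`. -/
noncomputable def scale (n : ℕ) :
    MvPolynomial (Fin n) ℂ →ₐ[ℂ] Polynomial (MvPolynomial (Fin n) ℂ) :=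
  aeval fun i => Polynomial.C (X i) * Polynomial.X

theorem coeff_scale {n : ℕ} (f : MvPolynomial (Fin n) ℂ) (m : ℕ) :
    (scale n f).coeff m = homogeneousComponent m f := by
  induction f using MvPolynomial.induction_on' with
  | add p q hp hq => simp [hp, hq]
  | monomial s a =>
    rw [homogeneousComponent_of_mem (n := s.degree) (isHomogeneous_monomial a rfl)]
    have : scale n (monomial s a) = Polynomial.monomial s.degree (monomial s a) := by
      rw [scale, aeval_monomial, ← Polynomial.C_mul_X_pow_eq_monomial, monomial_eq,
        Finsupp.prod_fintype _ _ (by simp), Finsupp.prod_fintype _ _ (by simp),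
        Finsupp.degree_eq_sum, ← Finset.prod_pow_eq_pow_sum]
      simp [mul_pow, Finset.prod_mul_distrib, mul_assoc]
    rw [this, Polynomial.coeff_monomial]
    simp [eq_comm]

theorem homogeneousComponent_of_lt_mvOrd {σ : Type*} {f : MvPolynomial σ ℂ} {m : ℕ}
    (h : m < mvOrd f) : homogeneousComponent m f = 0 := by
  by_contra h'
  exact Nat.notMem_of_lt_sInf h h'

theorem mvLow_ne_zero {σ : Type*} {f : MvPolynomial σ ℂ} (hf : f ≠ 0) : mvLow f ≠ 0 := by
  refine Nat.sInf_mem (s := {d | homogeneousComponent d f ≠ 0}) ?_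
  by_contra h
  apply hf
  rw [← sum_homogeneousComponent f]
  refine Finset.sum_eq_zero fun i _ => ?_
  by_contra h'
  exact h ⟨i, h'⟩

/-- `t (∂f/∂xⱼ)(t x) = t ^ ord f (∂f^low/∂xⱼ + t r)`. The extra factor `t` on the left makes this
valid also for `ord f = 0`, where `f^low` is constant. -/
theorem scale_pderiv {n : ℕ} (f : MvPolynomial (Fin n) ℂ) (j : Fin n) :
    ∃ r, Polynomial.X * scale n (pderiv j f) =
      Polynomial.X ^ mvOrd f * (Polynomial.C (pderiv j (mvLow f)) + Polynomial.X * r) := by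
  have hc : ∀ m, (Polynomial.X * scale n (pderiv j f)).coeff m =
      pderiv j (homogeneousComponent m f) := by
    intro m
    cases m with
    | zero => simp
    | succ m => rw [Polynomial.coeff_X_mul, coeff_scale, homogeneousComponent_pderiv]
  obtain ⟨h, hh⟩ : Polynomial.X ^ mvOrd f ∣ Polynomial.X * scale n (pderiv j f) := by
    rw [Polynomial.X_pow_dvd_iff]
    intro m hm
    rw [hc, homogeneousComponent_of_lt_mvOrd hm, map_zero]
  refine ⟨h.divX, ?_⟩
  have h0 : h.coeff 0 = pderiv j (mvLow f) := by
    rw [mvLow, ← hc, hh]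
    simp [Polynomial.coeff_X_pow_mul']
  rw [hh, ← h0, mul_comm Polynomial.X, add_comm, Polynomial.divX_mul_X_add]

/-- if the Jacobian determinant `D` of `φ₁,…,φ_n` is nonzero,
then the matrix `K` of partial derivatives of the lowest degree terms has rank
(over the fraction field `ℂ(x₁,…,x_n)`) at least `d₁ + ⋯ + d_n − d`, where
`d = ord D` and `d_i = ord φ_i`. -/
theorem rank_of_lowest_degree_jacobian
    (n : ℕ) (φ : Fin n → MvPolynomial (Fin n) ℂ)
    (hD : Matrix.det (Matrix.of fun i j : Fin n => pderiv j (φ i)) ≠ 0) :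
    (∑ i : Fin n, (mvOrd (φ i) : ℤ)) -
        (mvOrd (Matrix.det (Matrix.of fun i j : Fin n => pderiv j (φ i))) : ℤ) ≤
      (((Matrix.of fun i j : Fin n => pderiv j (mvLow (φ i))).map
          (algebraMap (MvPolynomial (Fin n) ℂ)
            (FractionRing (MvPolynomial (Fin n) ℂ)))).rank : ℤ) := by
  set J := Matrix.of fun i j : Fin n => pderiv j (φ i) with hJ
  set ι := algebraMap (MvPolynomial (Fin n) ℂ) (FractionRing (MvPolynomial (Fin n) ℂ)) with hι
  set K := (Matrix.of fun i j : Fin n => pderiv j (mvLow (φ i))).map ι with hK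
  choose R hR using fun i j : Fin n => scale_pderiv (φ i) j
  let S : Matrix (Fin n) (Fin n) (Polynomial (FractionRing (MvPolynomial (Fin n) ℂ))) :=
    Matrix.of fun i j => (R i j).map ι
  have hdvd := X_pow_dvd_det K S
  -- The determinant of `t J(t x)`, computed from its rows in two ways.
  have hdet : (Polynomial.X : Polynomial (FractionRing (MvPolynomial (Fin n) ℂ))) ^ n *
      (scale n J.det).map ι =
      Polynomial.X ^ (∑ i, mvOrd (φ i)) *
        (K.map Polynomial.C +
          (Polynomial.X : Polynomial (FractionRing (MvPolynomial (Fin n) ℂ))) • S).det := by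
    have h1 : (Polynomial.X : Polynomial (MvPolynomial (Fin n) ℂ)) ^ n * scale n J.det =
        (Matrix.of fun i j => Polynomial.X * scale n (pderiv j (φ i))).det := by
      have h := Matrix.det_smul ((scale n).mapMatrix J) Polynomial.X
      rw [Fintype.card_fin] at h
      rw [AlgHom.map_det, ← h]
      rfl
    have h2 : (Polynomial.X ^ n * scale n J.det).map ι =
        (Matrix.of fun i j => Polynomial.X ^ mvOrd (φ i) *
          (K.map Polynomial.C +
            (Polynomial.X : Polynomial (FractionRing (MvPolynomial (Fin n) ℂ))) • S) i j).det := by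
      rw [h1, ← Polynomial.coe_mapRingHom, RingHom.map_det]
      congr 1
      ext1 i j
      simp [hR, hK, S]
    rw [Matrix.det_mul_column, Finset.prod_pow_eq_pow_sum] at h2
    simpa using h2
  have hdvd' : Polynomial.X ^ (∑ i, mvOrd (φ i) + (n - K.rank)) ∣
      Polynomial.X ^ n * (scale n J.det).map ι := by
    rw [hdet, pow_add]
    exact mul_dvd_mul_left _ hdvd
  have hle : ∑ i, mvOrd (φ i) + (n - K.rank) ≤ n + mvOrd J.det := by
    by_contra! hlt
    have h := Polynomial.X_pow_dvd_iff.1 hdvd' _ hlt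
    rw [add_comm n, Polynomial.coeff_X_pow_mul, Polynomial.coeff_map, coeff_scale] at h
    exact mvLow_ne_zero hD ((map_eq_zero_iff ι (IsFractionRing.injective _ _)).1 h)
  have hrank : K.rank ≤ n := by simpa using K.rank_le_card_width
  rw [← Nat.cast_sum]
  omega
end

section
/- Let φ₁,…,φ_n ∈ ℂ[x₁,…,x_n], fix k ∈ {1,…,n}, and let ψ = Σ_{t=1}^N c_t·Π_{j≠k} φ_j^{a_{tj}}, where N ≥ 1, c_t ∈ ℂ and the a_{tj} are nonnegative integers (so ψ is a finite ℂ-linear combination of monomials in the φ_j with j ≠ k). Let J be the n×n Jacobian matrix with (i,j) entry ∂φ_j/∂x_i, and let J′ be the matrix obtained from J by replacing its k-th column with the column whose i-th entry is φ_k·(∂ψ/∂x_i) − ψ·(∂φ_k/∂x_i). Then det J′ = −ψ·det J. (This identity encodes that the log-volume form μ_Φ = dlogφ₁∧⋯∧dlogφ_n changes only by a sign under a one-step generalized cluster mutation φ_k ↦ ψ/φ_k.) -/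
/-! The chain rule makes `dψ` a polynomial combination of the `dφ_j` with `j ≠ k`, because `ψ` lies in
the subalgebra generated by those `φ_j` (`DiffSpan.C`, `.add`, `.mul`, `.self`). Hence the new `k`-th
column is `-ψ` times the old one plus a combination of the other columns, and
`Matrix.det_updateCol_sum` says that such a replacement multiplies the determinant by the
coefficient `-ψ` of the `k`-th column. -/

open MvPolynomial

/-- The differential of `p` is a polynomial combination of the differentials of the `φ j` with
`j ≠ k`. The combination is indexed by all `j`, with the `k`-th coefficient required to vanish. -/
def DiffSpan {n : ℕ} (φ : Fin n → MvPolynomial (Fin n) ℂ) (k : Fin n)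
    (p : MvPolynomial (Fin n) ℂ) : Prop :=
  ∃ d : Fin n → MvPolynomial (Fin n) ℂ, d k = 0 ∧
    ∀ i, pderiv i p = ∑ j, d j * pderiv i (φ j)

namespace DiffSpan

variable {n : ℕ} {φ : Fin n → MvPolynomial (Fin n) ℂ} {k : Fin n}
  {p q : MvPolynomial (Fin n) ℂ}

lemma C (z : ℂ) : DiffSpan φ k (MvPolynomial.C z) :=
  ⟨0, rfl, fun i => by simp⟩

lemma add (hp : DiffSpan φ k p) (hq : DiffSpan φ k q) : DiffSpan φ k (p + q) := by
  obtain ⟨d, hd, hp⟩ := hp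
  obtain ⟨e, he, hq⟩ := hq
  refine ⟨d + e, by simp [hd, he], fun i => ?_⟩
  simp [hp, hq, add_mul, Finset.sum_add_distrib]

lemma mul (hp : DiffSpan φ k p) (hq : DiffSpan φ k q) : DiffSpan φ k (p * q) := by
  obtain ⟨d, hd, hp⟩ := hp
  obtain ⟨e, he, hq⟩ := hq
  refine ⟨fun j => p * e j + q * d j, by simp [hd, he], fun i => ?_⟩
  simp only [Derivation.leibniz, smul_eq_mul, hp, hq, add_mul, Finset.sum_add_distrib,
    Finset.mul_sum, mul_assoc]

lemma self {j : Fin n} (hj : j ≠ k) : DiffSpan φ k (φ j) :=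
  ⟨Pi.single j 1, by simp [hj.symm], fun i => by simp [Pi.single_apply]⟩

lemma one : DiffSpan φ k 1 := by
  simpa using C (φ := φ) (k := k) 1

lemma pow (hp : DiffSpan φ k p) (m : ℕ) : DiffSpan φ k (p ^ m) := by
  induction m with
  | zero => simpa using one
  | succ m ih => rw [pow_succ]; exact ih.mul hp

end DiffSpan

/-- under a one-step generalized cluster mutation `φ_k ↦ ψ/φ_k`,
where `ψ` is a `ℂ`-linear combination of monomials in the `φ_j` with `j ≠ k`,
the Jacobian with its `k`-th column replaced by the column
`φ_k·∂ψ − ψ·∂φ_k` has determinant `−ψ·det J`. -/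
theorem mutation_changes_log_volume_form_by_sign
    (n : ℕ) (φ : Fin n → MvPolynomial (Fin n) ℂ) (k : Fin n)
    (N : ℕ) (hN : 1 ≤ N) (c : Fin N → ℂ) (a : Fin N → Fin n → ℕ)
    (ψ : MvPolynomial (Fin n) ℂ)
    (hψ : ψ = ∑ t : Fin N, C (c t) * ∏ j ∈ Finset.univ.erase k, φ j ^ a t j) :
    Matrix.det (Matrix.of fun i j : Fin n =>
      if j = k then φ k * pderiv i ψ - ψ * pderiv i (φ k) else pderiv i (φ j)) =
    - ψ * Matrix.det (Matrix.of fun i j : Fin n => pderiv i (φ j)) := by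
  have h : DiffSpan φ k ψ := by
    rw [hψ]
    refine Finset.sum_induction _ _ (fun _ _ => DiffSpan.add)
      (by simpa using DiffSpan.C (φ := φ) (k := k) 0) fun t _ => (DiffSpan.C _).mul ?_
    exact Finset.prod_induction _ _ (fun _ _ => DiffSpan.mul) DiffSpan.one
      fun j hj => (DiffSpan.self (Finset.ne_of_mem_erase hj)).pow _
  obtain ⟨d, hd, h⟩ := h
  have key := Matrix.det_updateCol_sum (Matrix.of fun i j : Fin n => pderiv i (φ j)) k
    (fun j => φ k * d j + if j = k then -ψ else 0)
  simp only [hd, mul_zero, zero_add, if_true, smul_eq_mul] at key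
  rw [← key]
  congr 1
  ext1 i j
  rw [Matrix.updateCol_apply]
  by_cases hj : j = k
  · simp [hj, h, add_mul, Finset.sum_add_distrib, Finset.mul_sum, mul_assoc, sub_eq_add_neg]
  · simp [hj]
end

section
/- Let R be a commutative ring, n ≥ 1, and u an n×n matrix over R. For any k with 1 ≤ k ≤ n−1 and any subset I₁ ⊆ {1,…,n} with |I₁| = k, the determinant of the k×k matrix obtained from [u·e₁ | u²·e₁ | ⋯ | u^k·e₁] by keeping only the rows indexed by I₁ equals Σ Π_{i=1}^{k} Δ_{I_i, I_{i+1}∪{1}}(u), where the sum is over all tuples of subsets I₂,…,I_k ⊆ {2,…,n} with |I_i| = k−i+1 for each i ∈ {2,…,k}, and the convention I_{k+1} = ∅ is used (so the last factor is Δ_{I_k,{1}}(u)). -/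
/-!
Let `K_k = [u e₁ | ⋯ | u^k e₁]`. Since `K_{k+1} = u * [e₁ | u e₁ | ⋯ | u^k e₁]`,
the Cauchy–Binet formula (`det_mul_eq_sum_minors`) expands a minor of `K_{k+1}` with rows `I` as a
sum over `(k+1)`-subsets `J` of `Δ_{I,J}(u)` times the minor of `[e₁ | u e₁ | ⋯ | u^k e₁]` with
rows `J`. The latter vanishes unless `1 ∈ J`, because its first column is `e₁`; when
`J = {1} ∪ J'`, expanding along that column leaves the minor of `K_k` with rows `J'`, with sign `+`
because `1` is the least index. This one-step recursion is `krylovMinor_succ`; iterating it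
produces the sum over chains of subsets.
-/

open scoped Classical

/-- `mtxMinor u I J` is the minor `Δ_{I,J}(u)`: the determinant of the
submatrix of `u` with rows indexed by `I` and columns indexed by `J`
(in increasing order); it is defined to be `0` if `|I| ≠ |J|`. -/
noncomputable def mtxMinor {R : Type*} [CommRing R] {n : ℕ}
    (u : Matrix (Fin n) (Fin n) R) (I J : Finset (Fin n)) : R :=
  if h : J.card = I.card then
    Matrix.det (Matrix.of fun a b : Fin I.card =>
      u ((I.orderIsoOfFin rfl a : Fin n)) ((J.orderIsoOfFin h b : Fin n)))
  else 0

/-- The Cauchy–Binet formula. Expanding the rows of `A * B` multilinearly gives a sum over maps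
`f : Fin k → Fin n`; only injective `f` survive, and those with image `J` are the increasing
enumeration of `J` precomposed with a permutation. -/
theorem det_mul_eq_sum_minors {R : Type*} [CommRing R] {n k : ℕ}
    (A : Matrix (Fin k) (Fin n) R) (B : Matrix (Fin n) (Fin k) R) :
    (A * B).det = ∑ J : {J : Finset (Fin n) // J.card = k},
      (A.submatrix id (J.1.orderEmbOfFin J.2)).det *
        (B.submatrix (J.1.orderEmbOfFin J.2) id).det := by
  have h1 : (A * B).det =
      ∑ f : Fin k → Fin n, (∏ i, A i (f i)) * (B.submatrix f id).det := by
    have hrow : A * B = fun i => ∑ j, A i j • B j := by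
      ext i j
      simp [Matrix.mul_apply]
    have := (Matrix.detRowAlternating (n := Fin k) (R := R)).toMultilinearMap.map_sum
      (fun i j => A i j • B j)
    rw [hrow]
    refine this.trans (Finset.sum_congr rfl fun f _ => ?_)
    exact MultilinearMap.map_smul_univ _ (fun i => A i (f i)) (fun i => B (f i))
  have h2 : ∑ f : Fin k → Fin n, (∏ i, A i (f i)) * (B.submatrix f id).det =
      ∑ f with Function.Injective f, (∏ i, A i (f i)) * (B.submatrix f id).det := by
    symm
    refine Finset.sum_subset (Finset.filter_subset _ _) fun f _ hf => ?_
    have hf' : ¬ Function.Injective f := by simpa using hf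
    simp only [Function.Injective, not_forall] at hf'
    obtain ⟨i, j, hij, hne⟩ := hf'
    rw [Matrix.det_zero_of_row_eq hne (by ext c; simp [hij]), mul_zero]
  rw [h1, h2]
  have h3 : ∀ J : {J : Finset (Fin n) // J.card = k},
      (A.submatrix id (J.1.orderEmbOfFin J.2)).det *
        (B.submatrix (J.1.orderEmbOfFin J.2) id).det =
      ∑ σ : Equiv.Perm (Fin k), (∏ i, A i (J.1.orderEmbOfFin J.2 (σ i))) *
        (B.submatrix (J.1.orderEmbOfFin J.2 ∘ σ) id).det := by
    intro J
    rw [← Matrix.det_transpose, Matrix.det_apply', Finset.sum_mul]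
    refine Finset.sum_congr rfl fun σ _ => ?_
    have := Matrix.det_permute σ (B.submatrix (J.1.orderEmbOfFin J.2) id)
    rw [Matrix.submatrix_submatrix] at this
    rw [show (id ∘ id : Fin k → Fin k) = id from rfl] at this
    rw [this]
    simp only [Matrix.transpose_apply, Matrix.submatrix_apply, id]
    ring
  simp_rw [h3]
  rw [Finset.sum_sigma']
  symm
  refine Finset.sum_bij (fun x _ => x.1.1.orderEmbOfFin x.1.2 ∘ x.2) ?_ ?_ ?_ ?_
  · rintro ⟨J, σ⟩ -
    simpa using (J.1.orderEmbOfFin J.2).injective.comp σ.injective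
  · rintro ⟨⟨J, hJ⟩, σ⟩ - ⟨⟨J', hJ'⟩, σ'⟩ - h
    have himg : J = J' := by
      have := congrArg Set.range h
      simpa [Set.range_comp] using this
    subst himg
    have : σ = σ' := by
      ext i
      have := (J.orderEmbOfFin hJ).injective (congrFun h i)
      rw [this]
    rw [this]
  · intro f hf
    have hf : Function.Injective f := by simpa using hf
    have hc : (Finset.univ.image f).card = k := by
      rw [Finset.card_image_of_injective _ hf]; simp
    have hmem : ∀ i, ∃ a, (Finset.univ.image f).orderEmbOfFin hc a = f i := by
      intro i
      have : f i ∈ Set.range ((Finset.univ.image f).orderEmbOfFin hc) := by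
        rw [Finset.range_orderEmbOfFin]; simp
      exact this
    choose g hg using hmem
    have hgi : Function.Injective g := fun a b hab => hf (by rw [← hg a, ← hg b, hab])
    refine ⟨⟨⟨Finset.univ.image f, hc⟩,
      Equiv.ofBijective g (Finite.injective_iff_bijective.mp hgi)⟩, Finset.mem_univ _, ?_⟩
    ext i
    simp [hg]
  · rintro ⟨J, σ⟩ -
    rfl

theorem mtxMinor_eq_det {R : Type*} [CommRing R] {n k : ℕ}
    (u : Matrix (Fin n) (Fin n) R) (I J : Finset (Fin n)) (hI : I.card = k) (hJ : J.card = k) :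
    mtxMinor u I J = (u.submatrix (I.orderEmbOfFin hI) (J.orderEmbOfFin hJ)).det := by
  subst hI
  rw [mtxMinor, dif_pos hJ]
  rfl

/-- The minor of `[u·e₁ | u²·e₁ | ⋯ | u^k·e₁]` on the rows `I`, where `z` is the index of `e₁`. -/
noncomputable def krylovMinor {R : Type*} [CommRing R] {n k : ℕ} (u : Matrix (Fin n) (Fin n) R)
    (z : Fin n) (I : Finset (Fin n)) (hI : I.card = k) : R :=
  Matrix.det (Matrix.of fun a b : Fin k => (u ^ (b.val + 1)) (I.orderEmbOfFin hI a) z)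

theorem orderEmbOfFin_insert_zero {n k : ℕ} (hn : 1 ≤ n) (J : Finset (Fin n)) (hJ : J.card = k)
    (hpos : ∀ j ∈ J, 1 ≤ j.val) (h : (insert ⟨0, hn⟩ J : Finset (Fin n)).card = k + 1) :
    ((insert ⟨0, hn⟩ J : Finset (Fin n)).orderEmbOfFin h : Fin (k + 1) → Fin n) =
      Fin.cons ⟨0, hn⟩ (J.orderEmbOfFin hJ) := by
  symm
  refine Finset.orderEmbOfFin_unique h ?_ ?_
  · intro x
    refine Fin.cases ?_ (fun i => ?_) x
    · simp
    · simp [Finset.orderEmbOfFin_mem]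
  · intro a b hab
    induction a using Fin.cases with
    | zero =>
      induction b using Fin.cases with
      | zero => exact absurd hab (lt_irrefl _)
      | succ b =>
        have := hpos _ (Finset.orderEmbOfFin_mem J hJ b)
        simpa [Fin.lt_def, Nat.one_le_iff_ne_zero, Nat.pos_iff_ne_zero] using this
    | succ a =>
      induction b using Fin.cases with
      | zero => exact absurd hab (by simp)
      | succ b => simpa using hab

/-- A minor of `[e₁ | u·e₁ | ⋯ | u^k·e₁]` whose row set contains the index of `e₁`, expanded along
its first column. -/
theorem det_shifted_krylov_insert {R : Type*} [CommRing R] {n k : ℕ} (hn : 1 ≤ n)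
    (u : Matrix (Fin n) (Fin n) R) (J : Finset (Fin n)) (hJ : J.card = k)
    (hpos : ∀ j ∈ J, 1 ≤ j.val) (h : (insert ⟨0, hn⟩ J : Finset (Fin n)).card = k + 1) :
    (Matrix.of fun a b : Fin (k + 1) =>
      (u ^ b.val) ((insert ⟨0, hn⟩ J : Finset (Fin n)).orderEmbOfFin h a) ⟨0, hn⟩).det =
    krylovMinor u ⟨0, hn⟩ J hJ := by
  rw [orderEmbOfFin_insert_zero hn J hJ hpos h, Matrix.det_succ_column_zero, Fin.sum_univ_succ]
  rw [Finset.sum_eq_zero, add_zero]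
  · simp [krylovMinor]
    rfl
  · intro i _
    have : J.orderEmbOfFin hJ i ≠ ⟨0, hn⟩ := by
      intro h0
      have := hpos _ (Finset.orderEmbOfFin_mem J hJ i)
      rw [h0] at this
      simp at this
    simp [this]

/-- The one-step recursion: factor out `u`, apply Cauchy–Binet, and expand along the column `e₁`. -/
theorem krylovMinor_succ {R : Type*} [CommRing R] {n k : ℕ} (hn : 1 ≤ n)
    (u : Matrix (Fin n) (Fin n) R) (I : Finset (Fin n)) (hI : I.card = k + 1) :
    krylovMinor u ⟨0, hn⟩ I hI =
      ∑ J : {J : Finset (Fin n) // J.card = k ∧ ∀ j ∈ J, 1 ≤ j.val},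
        mtxMinor u I (insert ⟨0, hn⟩ J.1) * krylovMinor u ⟨0, hn⟩ J.1 J.2.1 := by
  have hfac : krylovMinor u ⟨0, hn⟩ I hI =
      (u.submatrix (I.orderEmbOfFin hI) id *
        (Matrix.of fun (a : Fin n) (b : Fin (k + 1)) => (u ^ b.val) a ⟨0, hn⟩)).det := by
    rw [krylovMinor]
    congr 1
    ext a b
    simp [Matrix.mul_apply, pow_succ' u]
  rw [hfac, det_mul_eq_sum_minors]
  have hnot : ∀ J : {J : Finset (Fin n) // J.card = k ∧ ∀ j ∈ J, 1 ≤ j.val},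
      (⟨0, hn⟩ : Fin n) ∉ J.1 := fun J h => by simpa using J.2.2 _ h
  have hcard : ∀ J : {J : Finset (Fin n) // J.card = k ∧ ∀ j ∈ J, 1 ≤ j.val},
      (insert ⟨0, hn⟩ J.1 : Finset (Fin n)).card = k + 1 := fun J => by
    rw [Finset.card_insert_of_notMem (hnot J), J.2.1]
  symm
  refine Finset.sum_of_injOn (fun J => ⟨insert ⟨0, hn⟩ J.1, hcard J⟩) ?_ ?_ ?_ ?_
  · intro J _ J' _ h
    have h' : insert (⟨0, hn⟩ : Fin n) J.1 = insert ⟨0, hn⟩ J'.1 := congrArg Subtype.val h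
    apply Subtype.ext
    rw [← Finset.erase_insert (hnot J), h', Finset.erase_insert (hnot J')]
  · intro J _
    simp
  · rintro ⟨J, hJ⟩ - hout
    have h0 : (⟨0, hn⟩ : Fin n) ∉ J := by
      intro h0
      apply hout
      refine ⟨⟨J.erase ⟨0, hn⟩, ?_, ?_⟩, by simp, ?_⟩
      · rw [Finset.card_erase_of_mem h0, hJ]; rfl
      · intro j hj
        have := (Finset.mem_erase.mp hj).1
        rw [Ne, Fin.ext_iff] at this
        exact Nat.one_le_iff_ne_zero.mpr this
      · exact Subtype.ext (Finset.insert_erase h0)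
    -- Without the index of `e₁`, the first column of the second factor vanishes
    rw [mul_eq_zero_of_right]
    refine Matrix.det_eq_zero_of_column_eq_zero 0 fun i => ?_
    have : J.orderEmbOfFin hJ i ≠ ⟨0, hn⟩ := fun h =>
      h0 (h ▸ Finset.orderEmbOfFin_mem J hJ i)
    simp [this]
  · intro J _
    rw [mtxMinor_eq_det u I _ hI (hcard J),
      ← det_shifted_krylov_insert hn u J.1 J.2.1 J.2.2 (hcard J)]
    rfl

/-- The recursion `krylovMinor_succ` iterated: a chain `T` for `k + 1` is `I` followed by a chain
for `k`. For `k ≥ 1`, the condition `T (Fin.last k) = ∅` is the last case, `t = k - 1`, of the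
cardinality condition. -/
theorem krylovMinor_eq_sum {R : Type*} [CommRing R] {n : ℕ} (hn : 1 ≤ n)
    (u : Matrix (Fin n) (Fin n) R) (k : ℕ) : ∀ (I : Finset (Fin n)) (hI : I.card = k),
    krylovMinor u ⟨0, hn⟩ I hI =
      ∑ T ∈ Finset.univ.filter (fun T : Fin (k + 1) → Finset (Fin n) =>
        T 0 = I ∧ ∀ t : Fin k,
          ((T t.succ).card = k - (t.val + 1) ∧ ∀ j ∈ T t.succ, 1 ≤ j.val)),
      ∏ t : Fin k, mtxMinor u (T t.castSucc) (insert ⟨0, hn⟩ (T t.succ)) := by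
  induction k with
  | zero =>
    intro I hI
    have : (Finset.univ.filter (fun T : Fin (0 + 1) → Finset (Fin n) =>
        T 0 = I ∧ ∀ t : Fin 0,
          ((T t.succ).card = 0 - (t.val + 1) ∧ ∀ j ∈ T t.succ, 1 ≤ j.val))) = {fun _ => I} := by
      ext T
      simp [funext_iff, Fin.forall_fin_one]
    rw [this]
    simp [krylovMinor]
  | succ k ih =>
    intro I hI
    rw [krylovMinor_succ]
    simp_rw [ih, Finset.mul_sum]
    rw [Finset.sum_sigma']
    refine Finset.sum_bij (fun x _ => Fin.cons I x.2) ?_ ?_ ?_ ?_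
    · rintro ⟨⟨J, hJ⟩, T⟩ hx
      simp only [Finset.mem_sigma, Finset.mem_univ, true_and, Finset.mem_filter] at hx
      simp only [Finset.mem_univ, true_and, Finset.mem_filter, Fin.cons_zero, Fin.cons_succ]
      intro t
      induction t using Fin.cases with
      | zero => rw [hx.1]; simpa using hJ
      | succ t => simpa using hx.2 t
    · rintro ⟨⟨J, hJ⟩, T⟩ hx ⟨⟨J', hJ'⟩, T'⟩ hx' h
      simp only [Finset.mem_sigma, Finset.mem_univ, true_and, Finset.mem_filter] at hx hx'
      have hT : T = T' := Fin.cons_right_injective (α := fun _ => Finset (Fin n)) I h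
      subst hT
      have hJJ : J = J' := hx.1.symm.trans hx'.1
      subst hJJ
      rfl
    · intro T hT
      simp only [Finset.mem_univ, true_and, Finset.mem_filter] at hT
      refine ⟨⟨⟨T 1, ?_⟩, Fin.tail T⟩, ?_, ?_⟩
      · simpa using hT.2 0
      · simp only [Finset.mem_sigma, Finset.mem_univ, true_and, Finset.mem_filter]
        refine ⟨rfl, fun t => ?_⟩
        simpa [Fin.tail] using hT.2 t.succ
      · obtain ⟨rfl, -⟩ := hT
        exact Fin.cons_self_tail T
    · rintro ⟨⟨J, hJ⟩, T⟩ hx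
      simp only [Finset.mem_sigma, Finset.mem_univ, true_and, Finset.mem_filter] at hx
      rw [Fin.prod_univ_succ]
      simp [hx.1]

/-- Cauchy–Binet expansion of the minor of
`[u·e₁ | u²·e₁ | ⋯ | u^k·e₁]` on the rows `I₁`:
it equals the sum, over all tuples `I₂,…,I_k ⊆ {2,…,n}` with
`|I_i| = k−i+1`, of `Π_{i=1}^{k} Δ_{I_i, I_{i+1}∪{1}}(u)` (with
`I_{k+1} = ∅`).  Indices are 0-based in the formalization: `1` becomes
`⟨0,_⟩` and `{2,…,n}` becomes the set of indices with positive value. -/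
theorem minor_of_krylov_matrix_expansion
    {R : Type*} [CommRing R] (n : ℕ) (hn : 1 ≤ n)
    (u : Matrix (Fin n) (Fin n) R) (k : ℕ) (hk1 : 1 ≤ k) (hk2 : k ≤ n - 1)
    (I₁ : Finset (Fin n)) (hI : I₁.card = k) :
    Matrix.det (Matrix.of fun a b : Fin k =>
        (u ^ (b.val + 1)) ((I₁.orderIsoOfFin hI a : Fin n)) ⟨0, hn⟩) =
    ∑ T ∈ Finset.univ.filter (fun T : Fin (k + 1) → Finset (Fin n) =>
        T 0 = I₁ ∧ T (Fin.last k) = ∅ ∧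
        ∀ t : Fin (k + 1), 1 ≤ t.val → t.val ≤ k - 1 →
          ((T t).card = k - t.val ∧ ∀ j ∈ T t, 1 ≤ j.val)),
      ∏ t : Fin k, mtxMinor u (T t.castSucc) (insert ⟨0, hn⟩ (T t.succ)) := by
  refine (krylovMinor_eq_sum hn u k I₁ hI).trans ?_
  refine Finset.sum_congr (Finset.filter_congr fun T _ => and_congr_right fun _ => ?_)
    fun _ _ => rfl
  constructor
  · intro h
    refine ⟨?_, fun t h1 h2 => ?_⟩
    · obtain ⟨m, rfl⟩ : ∃ m, k = m + 1 := ⟨k - 1, by omega⟩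
      have := (h (Fin.last m)).1
      rw [Fin.succ_last] at this
      simpa using this
    · obtain ⟨s, rfl⟩ := Fin.exists_succ_eq.mpr (show t ≠ 0 by rintro rfl; simp at h1)
      exact h s
  · rintro ⟨hlast, h⟩ t
    by_cases ht : t.val + 1 ≤ k - 1
    · exact h t.succ (by simp) ht
    · have hk : t.val + 1 = k := by omega
      have : t.succ = Fin.last k := Fin.ext hk
      rw [this, hlast]
      simp [hk]
end

section
/- Let n ≥ 1 and let u be the generic n×n matrix over the polynomial ring R_n = ℂ[u_{ij} : 1 ≤ i,j ≤ n], i.e., the matrix whose (i,j) entry is the variable u_{ij}. For any k with 0 ≤ k ≤ n−1 and any pairwise distinct indices i₁,…,i_k ∈ {2,…,n}, the determinant of the n×n matrix [e_{i₁} | ⋯ | e_{i_k} | u^{n−k−1}·e₁ | u^{n−k−2}·e₁ | ⋯ | u·e₁ | e₁] is a nonzero element of R_n. -/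
/-!
A polynomial is nonzero as soon as one of its specializations is. Extend `i₁, …, i_k` to a
permutation `f` of the indices with `f j = i_{j+1}` for `j < k` and `f (n-1) = 0` (0-based); this is
possible because the `i_t` are distinct and different from `0`. Specialize `u` to the nilpotent
shift sending `e_{f j}` to `e_{f (j-1)}` and `e_{f 0}` to `0`. Then `u ^ m * e_{f (n-1)}` is
`e_{f (n-1-m)}`, so column `j` of the specialized matrix is `e_{f j}` for every `j`: it is a
permutation matrix, whose determinant is `±1`.
-/

open MvPolynomial

/-- The shift `e_{f j} ↦ e_{f (j-1)}`, `e_{f 0} ↦ 0` along the ordering `f` of the basis. -/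
def shiftAlong {n : ℕ} (f : Equiv.Perm (Fin n)) : Matrix (Fin n) (Fin n) ℂ :=
  Matrix.of fun a b => if (f.symm a).val + 1 = (f.symm b).val then 1 else 0

lemma shiftAlong_pow_apply {n : ℕ} (f : Equiv.Perm (Fin n)) (m : ℕ) (a b : Fin n) :
    (shiftAlong f ^ m) a b = if (f.symm a).val + m = (f.symm b).val then 1 else 0 := by
  induction m generalizing a with
  | zero => simp [Matrix.one_apply, Fin.val_inj]
  | succ m ih =>
    rw [pow_succ', Matrix.mul_apply]
    have hA (c : Fin n) : shiftAlong f a c =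
        if (f.symm a).val + 1 = (f.symm c).val then 1 else 0 := rfl
    simp only [ih, hA]
    by_cases h : (f.symm a).val + 1 < n
    · rw [Finset.sum_eq_single (f ⟨(f.symm a).val + 1, h⟩)]
      · simp [add_assoc, add_comm]
      · intro c _ hc
        have : (f.symm a).val + 1 ≠ (f.symm c).val := fun h' => hc (by simp [h'])
        simp [this]
      · simp
    · rw [Finset.sum_eq_zero, if_neg (by omega)]
      intro c _
      rw [if_neg (by omega), zero_mul]

lemma exists_perm_extending (n : ℕ) (hn : 1 ≤ n) (k : ℕ) (hk : k ≤ n - 1)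
    (ι : Fin k → Fin n) (hinj : Function.Injective ι) (hι : ∀ t, 1 ≤ (ι t).val) :
    ∃ f : Equiv.Perm (Fin n), (∀ t : Fin k, f ⟨t.val, by omega⟩ = ι t) ∧
      f ⟨n - 1, by omega⟩ = ⟨0, hn⟩ := by
  let g : Fin n → Fin n := fun j => if h : j.val < k then ι ⟨j.val, h⟩ else ⟨0, hn⟩
  let s : Set (Fin n) := {j | j.val < k ∨ j.val = n - 1}
  have hg : Set.InjOn g s := by
    intro x hx y hy hxy
    simp only [s, Set.mem_ofPred_eq] at hx hy
    simp only [g] at hxy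
    split_ifs at hxy with h1 h2 h2
    · simpa [Fin.ext_iff] using hinj hxy
    · have := hι ⟨x.val, h1⟩
      simp [hxy] at this
    · have := hι ⟨y.val, h2⟩
      simp [← hxy] at this
    · exact Fin.ext (by omega)
  obtain ⟨e, he⟩ := Set.MapsTo.exists_equiv_extend_of_card_eq (t := Finset.univ)
    (by simp) (fun _ _ => by simp : Set.MapsTo g s (Finset.univ : Finset (Fin n))) hg
  refine ⟨e.trans (Equiv.subtypeUnivEquiv (by simp)), fun t => ?_, ?_⟩
  · have := he ⟨t.val, by omega⟩ (Or.inl t.isLt)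
    simpa [g] using this
  · have := he ⟨n - 1, by omega⟩ (Or.inr rfl)
    simpa [g, not_lt.mpr hk] using this

/-- for the generic `n×n` matrix `u` (entries the variables
`u_{ij}`) and pairwise distinct indices `i₁,…,i_k ∈ {2,…,n}` (0-based: with
positive value), the determinant of
`[e_{i₁} | ⋯ | e_{i_k} | u^{n−k−1}·e₁ | ⋯ | u·e₁ | e₁]` is a nonzero
polynomial. -/
theorem generic_matrix_krylov_with_basis_vectors_det_ne_zero
    (n : ℕ) (hn : 1 ≤ n) (k : ℕ) (hk : k ≤ n - 1)
    (ι : Fin k → Fin n) (hinj : Function.Injective ι)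
    (hι : ∀ t, 1 ≤ (ι t).val) :
    Matrix.det (Matrix.of fun i j : Fin n =>
      if h : j.val < k then
        (if i = ι ⟨j.val, h⟩ then (1 : MvPolynomial (Fin n × Fin n) ℂ) else 0)
      else
        ((Matrix.of fun a b : Fin n =>
            (X (a, b) : MvPolynomial (Fin n × Fin n) ℂ)) ^ (n - 1 - j.val))
          i ⟨0, hn⟩) ≠ 0 := by

  obtain ⟨f, hf, hlast⟩ := exists_perm_extending n hn k hk ι hinj hι
  intro h0
  have h1 := congrArg (eval fun p : Fin n × Fin n => shiftAlong f p.1 p.2) h0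
  rw [RingHom.map_det, map_zero] at h1
  have hu : (eval fun p : Fin n × Fin n => shiftAlong f p.1 p.2).mapMatrix
      (Matrix.of fun a b : Fin n => (X (a, b) : MvPolynomial (Fin n × Fin n) ℂ)) =
      shiftAlong f := by
    ext a b
    simp
  have hsymm : f.symm ⟨0, hn⟩ = ⟨n - 1, by omega⟩ := by rw [← hlast, f.symm_apply_apply]
  have hM : ∀ M : Matrix (Fin n) (Fin n) ℂ,
      (∀ i j, M i j = if i = f j then 1 else 0) → M.det ≠ 0 := by
    intro M hM
    have : M = (1 : Matrix (Fin n) (Fin n) ℂ).submatrix id f := by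
      ext i j
      simp [hM, Matrix.one_apply]
    rw [this, Matrix.det_permute']
    simp
  refine hM _ (fun i j => ?_) h1
  simp only [RingHom.mapMatrix_apply, Matrix.map_apply, Matrix.of_apply]
  by_cases hj : j.val < k
  · rw [dif_pos hj, ← hf ⟨j, hj⟩]
    split_ifs <;> simp
  · rw [dif_neg hj, ← Matrix.map_apply (f := eval _), ← RingHom.mapMatrix_apply, map_pow, hu,
      shiftAlong_pow_apply, hsymm]
    congr 1
    rw [← Equiv.symm_apply_eq, Fin.ext_iff, eq_iff_iff]
    dsimp only
    omega
end

section
/- Let K be a field (e.g., K = ℂ) and n ≥ 1. For an n×n matrix f over K, let f̃ denote the n×n matrix whose first column is e₁ and whose j-th column, for 2 ≤ j ≤ n, is the (j−1)-st column of f. Then: (i) if f is such that f̃ is invertible and u := f·f̃^{-1}, then u^k·e₁ = f·e_k for all k ∈ {1,…,n}; in particular [u·e₁ | u²·e₁ | ⋯ | u^n·e₁] = f; and (ii) for any n×n matrix u over K, setting f := [u·e₁ | u²·e₁ | ⋯ | u^n·e₁], one has f = u·f̃, so that if f̃ is invertible then u = f·f̃^{-1}. Consequently the maps u ↦ [u·e₁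 | ⋯ | u^n·e₁] and f ↦ f·f̃^{-1} are mutually inverse on the loci where f̃ is invertible. -/
/-!
Right multiplication by a matrix acts column by column, so for any `M` the first column of `M * f̃`
is `M e₁` and its `(j + 1)`-st column is `M` times the `j`-th column of `f`
(`mul_tildeMat_zero`, `mul_tildeMat_succ`). Hence the equation `u * f̃ = f` says exactly that
`f e₁ = u e₁` and `f e_{j+1} = u (f e_j)`, a recursion whose only solution is `f e_k = u ^ k e₁`
(`pow_col_of_mul_tildeMat`, `krylov_eq_mul_tildeMat`). When `f̃` is invertible, `u * f̃ = f` is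
equivalent to `u = f * f̃⁻¹`, and both halves of the theorem follow.
-/

/-- `tildeMat f` is the matrix `f̃` whose first column is the standard basis
vector `e₁` and whose `j`-th column (for `j ≥ 2`) is the `(j−1)`-st column
of `f`. -/
def tildeMat {K : Type*} [Field K] {n : ℕ} (f : Matrix (Fin n) (Fin n) K) :
    Matrix (Fin n) (Fin n) K :=
  Matrix.of fun i j =>
    if j.val = 0 then (if i.val = 0 then 1 else 0)
    else f i ⟨j.val - 1, by have := j.isLt; omega⟩

theorem mul_tildeMat_zero {K : Type*} [Field K] {n : ℕ} (hn : 0 < n)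
    (M f : Matrix (Fin n) (Fin n) K) (i : Fin n) :
    (M * tildeMat f) i ⟨0, hn⟩ = M i ⟨0, hn⟩ := by
  have h : ∀ l : Fin n, tildeMat f l ⟨0, hn⟩ = if l = ⟨0, hn⟩ then 1 else 0 := by
    intro l
    simp [tildeMat, Fin.ext_iff]
  simp [Matrix.mul_apply, h]

theorem mul_tildeMat_succ {K : Type*} [Field K] {n : ℕ} (M f : Matrix (Fin n) (Fin n) K)
    (i : Fin n) (k : ℕ) (hk : k + 1 < n) :
    (M * tildeMat f) i ⟨k + 1, hk⟩ = (M * f) i ⟨k, by omega⟩ := by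
  simp [Matrix.mul_apply, tildeMat]

theorem pow_col_of_mul_tildeMat {K : Type*} [Field K] {n : ℕ} (hn : 0 < n)
    (u f : Matrix (Fin n) (Fin n) K) (h : u * tildeMat f = f) (k : ℕ) (hk : k < n) (i : Fin n) :
    (u ^ (k + 1)) i ⟨0, hn⟩ = f i ⟨k, hk⟩ := by
  induction k generalizing i with
  | zero => rw [zero_add, pow_one, ← mul_tildeMat_zero hn u f, h]
  | succ k ih =>
    have hs := mul_tildeMat_succ u f i k hk
    rw [h] at hs
    rw [hs, pow_succ', Matrix.mul_apply, Matrix.mul_apply]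
    exact Finset.sum_congr rfl fun l _ => by rw [ih (by omega)]

theorem krylov_eq_mul_tildeMat {K : Type*} [Field K] {n : ℕ} (hn : 0 < n)
    (u : Matrix (Fin n) (Fin n) K) :
    (Matrix.of fun i j : Fin n => (u ^ (j.val + 1)) i ⟨0, hn⟩) =
      u * tildeMat (Matrix.of fun i j : Fin n => (u ^ (j.val + 1)) i ⟨0, hn⟩) := by
  ext i ⟨j, hj⟩
  cases j with
  | zero => rw [mul_tildeMat_zero]; simp
  | succ k =>
    rw [mul_tildeMat_succ, Matrix.of_apply, pow_succ', Matrix.mul_apply, Matrix.mul_apply]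
    rfl

/-- (i) if `f̃` is invertible and `u = f·f̃⁻¹` then
`u^k·e₁ = f·e_k` for `k = 1,…,n`, so `[u·e₁ | ⋯ | u^n·e₁] = f`;
(ii) for any `u`, setting `f = [u·e₁ | ⋯ | u^n·e₁]` one has `f = u·f̃`, and
if `f̃` is invertible then `u = f·f̃⁻¹`.  Hence the two maps are mutually
inverse on the loci where `f̃` is invertible. -/
theorem krylov_matrix_birational_inverse
    {K : Type*} [Field K] (n : ℕ) (hn : 1 ≤ n) :
    (∀ f : Matrix (Fin n) (Fin n) K, IsUnit (tildeMat f).det →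
      (∀ k i : Fin n,
          ((f * (tildeMat f)⁻¹) ^ (k.val + 1)) i ⟨0, hn⟩ = f i k) ∧
      (Matrix.of fun i j : Fin n =>
          ((f * (tildeMat f)⁻¹) ^ (j.val + 1)) i ⟨0, hn⟩) = f) ∧
    (∀ u : Matrix (Fin n) (Fin n) K,
      (Matrix.of fun i j : Fin n => (u ^ (j.val + 1)) i ⟨0, hn⟩) =
        u * tildeMat (Matrix.of fun i j : Fin n => (u ^ (j.val + 1)) i ⟨0, hn⟩) ∧
      (IsUnit (tildeMat
          (Matrix.of fun i j : Fin n => (u ^ (j.val + 1)) i ⟨0, hn⟩)).det →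
        u = (Matrix.of fun i j : Fin n => (u ^ (j.val + 1)) i ⟨0, hn⟩) *
            (tildeMat
              (Matrix.of fun i j : Fin n => (u ^ (j.val + 1)) i ⟨0, hn⟩))⁻¹)) := by
  refine ⟨fun f hf => ?_, fun u => ⟨krylov_eq_mul_tildeMat hn u, fun hu => ?_⟩⟩
  · have h : f * (tildeMat f)⁻¹ * tildeMat f = f := Matrix.nonsing_inv_mul_cancel_right _ _ hf
    have hcol := pow_col_of_mul_tildeMat hn _ f h
    exact ⟨fun k i => hcol k k.isLt i, Matrix.ext fun i j => hcol j j.isLt i⟩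
  · have h := krylov_eq_mul_tildeMat hn u
    -- Only the left factor of the product is rewritten: `f` also occurs inside `f̃⁻¹`.
    exact (Matrix.mul_nonsing_inv_cancel_right _ u hu).symm.trans
      (congrArg (· * (tildeMat _)⁻¹) h.symm)
end

section
/- Let n ≥ 1 and let u be the generic n×n matrix over the polynomial ring R_n = ℂ[u_{ab} : 1 ≤ a,b ≤ n], i.e., the matrix whose (a,b) entry is the variable u_{ab}. Let {·,·} be the Kirillov–Kostant–Souriau bracket of gl(n,ℂ) on R_n, i.e., the unique ℂ-bilinear map R_n × R_n → R_n which is a derivation in each argument and satisfies {u_{ij}, u_{kl}} = δ_{jk}·u_{il} − δ_{li}·u_{kj} for all i,j,k,l. Define the following family of n(n+1)/2 polynomials: for p ∈ {0,…,n−2} and i ∈ {1,…,p+1}, let F_{p,i} be the determinant of the (n−p−1)×(n−p−1) matrix obtained from [u·e₁ | u²·e₁ | ⋯ | u^{n−p−1}·e₁] by keeping only the rows i+1, i+2, …, n−p+i−1; and for i ∈ {0,…,n−1}, let G_i = Σ_{S ⊆ {1,…,n}, |S| = n−i} det(u_S^S), the sum of all principal (n−i)×(n−i) minors of u. Then the family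 {F_{p,i} : 0 ≤ p ≤ n−2, 1 ≤ i ≤ p+1} ∪ {G_i : 0 ≤ i ≤ n−1} is pairwise commuting for {·,·} (i.e., the bracket of any two members is 0) and is algebraically independent over ℂ. Hence it is a polynomial integrable system on gl(n,ℂ)*: it consists of n(n+1)/2 = n² − (1/2)(n²−n) algebraically independent, pairwise Poisson-commuting polynomials, where n²−n is the rank of the KKS Poisson structure of gl(n,ℂ). -/
/-!
Let `o` be the first index, so that the Krylov vectors are `u ^ a e_o`.

The Krylov entries satisfy
`{(u ^ a) i o, (u ^ b) k o} = ∑ s < a, ((u ^ (s + b)) i o * (u ^ (a - 1 - s)) k o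
  - (u ^ s) i o * (u ^ (a + b - 1 - s)) k o)`.
Summing over the columns of a Krylov minor `M` on rows avoiding `o`, only Krylov vectors of degree
below `e` survive in `{M, (u ^ e) i o}`, with coefficients independent of the row `i`
(`bracket_minor_mem`). So the bracket of `M` with a second minor is a sum of determinants in which
a column `u ^ e e_o` has been replaced by a combination of lower Krylov vectors. Such a
combination lies in the span of the preceding columns and of `e_o`, and the latter vanishes on the
rows in question; hence every such determinant is zero (`cramer_krylovSpan`), and any two Krylov
minors on rows avoiding `o` commute (`bracket_minor_minor`).

The sums of principal minors are, up to sign, the coefficients of the characteristic polynomial.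
Bracketing with a generator acts on `u` as a commutator with an elementary matrix, so over the dual
numbers the infinitesimally displaced matrix is conjugate to `u` and has the same characteristic
polynomial (`derivation_charpoly_coeff`). Thus these coefficients are Casimirs
(`bracket_casimir`).

For algebraic independence it suffices to find one matrix, over the fraction field of a polynomial
ring with one variable per member of the family, at which each member takes the value of its own
variable. Nonzero interval minors can be prescribed column by column, since each is affine in its
bottom right entry with slope a smaller one (`exists_interval_minors`). A matrix with the resulting
Krylov vectors and any given characteristic polynomial is a conjugate of a companion matrix
(`exists_krylov`); together these give `exists_generic_matrix`.
-/

open MvPolynomial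
open scoped Classical

/-! ### Derivations of products and determinants -/

lemma derivation_prod_aux {A ι : Type*} [CommRing A] [Algebra ℂ A] [DecidableEq ι]
    (D : Derivation ℂ A A) (s : Finset ι) (f : ι → A) :
    D (∏ j ∈ s, f j) = ∑ i ∈ s, ∏ j ∈ s, Function.update f i (D (f i)) j := by
  induction s using Finset.induction_on with
  | empty => simp
  | insert a s ha ih =>
    rw [Finset.prod_insert ha, D.leibniz, ih, Finset.sum_insert ha, Finset.prod_insert ha,
      Function.update_self]
    have h1 : ∏ j ∈ s, Function.update f a (D (f a)) j = ∏ j ∈ s, f j :=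
      Finset.prod_congr rfl fun j hj => Function.update_of_ne (by rintro rfl; exact ha hj) _ _
    have h2 : ∀ i ∈ s, ∏ j ∈ insert a s, Function.update f i (D (f i)) j
        = f a * ∏ j ∈ s, Function.update f i (D (f i)) j := by
      intro i hi
      rw [Finset.prod_insert ha, Function.update_of_ne (by rintro rfl; exact ha hi)]
    rw [h1, Finset.sum_congr rfl h2, ← Finset.mul_sum, smul_eq_mul, smul_eq_mul]
    ring

/-- Jacobi's formula, column by column: a derivation acts on a determinant by acting on one
column at a time; `Matrix.cramer M v b` is the determinant of `M` with column `b` replaced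
by `v`. -/
lemma derivation_det_aux {A : Type*} [CommRing A] [Algebra ℂ A] {r : ℕ}
    (D : Derivation ℂ A A) (M : Matrix (Fin r) (Fin r) A) :
    D M.det = ∑ b, Matrix.cramer M (fun a => D (M a b)) b := by
  simp only [Matrix.cramer_apply, Matrix.det_apply, map_sum]
  rw [Finset.sum_comm]
  refine Finset.sum_congr rfl fun σ _ => ?_
  rw [Units.smul_def, map_zsmul, derivation_prod_aux, Finset.smul_sum]
  refine Finset.sum_congr rfl fun b _ => ?_
  rw [Units.smul_def]
  congr 1
  refine Finset.prod_congr rfl fun j _ => ?_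
  rw [Matrix.updateCol_apply, Function.update_apply]
  split_ifs with h
  · subst h; rfl
  · rfl

/-! ### Coefficients of the characteristic polynomial are Casimirs -/

/-- A derivation `D` as the ring homomorphism `f ↦ f + ε D f` to the dual numbers. -/
noncomputable def dualHom {A : Type*} [CommRing A] [Algebra ℂ A] (D : Derivation ℂ A A) :
    A →+* DualNumber A where
  toFun f := TrivSqZeroExt.inl f + TrivSqZeroExt.inr (D f)
  map_one' := by ext <;> simp
  map_zero' := by ext <;> simp
  map_add' a b := by ext <;> simp
  map_mul' a b := by ext <;> simp [mul_comm]

/-- If `D u = u E - E u`, then `u + ε D u` is the conjugate of `u` by `1 + ε E`, so `D` kills the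
coefficients of the characteristic polynomial of `u`. -/
lemma derivation_charpoly_coeff {A ι : Type*} [CommRing A] [Algebra ℂ A] [Fintype ι]
    [DecidableEq ι] (D : Derivation ℂ A A) (u E : Matrix ι ι A)
    (h : u.map D = u * E - E * u) (m : ℕ) : D (u.charpoly.coeff m) = 0 := by
  let i : A →+* DualNumber A := TrivSqZeroExt.inlHom A A
  let ε : DualNumber A := DualNumber.eps
  have hε : ε * ε = 0 := DualNumber.eps_mul_eps
  let U := u.map i
  let F := E.map i
  have hφ : u.map (dualHom D) = U + ε • (U * F - F * U) := by
    have h3 : U * F - F * U = (u * E - E * u).map i := by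
      rw [Matrix.map_sub i (map_sub i), Matrix.map_mul, Matrix.map_mul]
    rw [h3, ← h]
    ext a b <;> simp [dualHom, U, i, ε]
  have h12 : (1 + ε • F) * (1 - ε • F) = 1 := by
    simp [mul_sub, add_mul, smul_smul, hε]
  have h21 : (1 - ε • F) * (1 + ε • F) = 1 := by
    simp [mul_add, sub_mul, smul_smul, hε]
  let g : (Matrix ι ι (DualNumber A))ˣ := ⟨1 - ε • F, 1 + ε • F, h21, h12⟩
  have hconj : u.map (dualHom D) = g.val * U * g.inv := by
    rw [hφ]
    simp only [g]
    simp [mul_add, sub_mul, smul_smul, hε, smul_sub]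
    abel
  have hc : (u.map (dualHom D)).charpoly = U.charpoly := by
    have hinv : g.inv = (g.val)⁻¹ := Matrix.coe_units_inv g
    rw [hconj, hinv]
    exact Matrix.charpoly_units_conj g U
  have h4 := congrArg (fun p => Polynomial.coeff p m) hc
  simp only [U, Matrix.charpoly_map, Polynomial.coeff_map] at h4
  simpa [dualHom, i] using congrArg TrivSqZeroExt.snd h4

/-! ### Brackets of Krylov vectors and of their minors -/

section Bracket

variable {n : ℕ} (D : MvPolynomial (Fin n × Fin n) ℂ →
    Derivation ℂ (MvPolynomial (Fin n × Fin n) ℂ) (MvPolynomial (Fin n × Fin n) ℂ))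
  (hskew : ∀ a c, D c a = - D a c)
  (hgen : ∀ i j k l : Fin n, D (X (k, l)) (X (i, j)) =
      (if j = k then X (i, l) else 0) - (if l = i then X (k, j) else 0))
  (u : Matrix (Fin n) (Fin n) (MvPolynomial (Fin n × Fin n) ℂ))
  (hu : ∀ a b, u a b = X (a, b))

include hgen hu in
lemma bracket_pow_gen (i j k l : Fin n) (b : ℕ) : D (X (k, l)) ((u ^ b) i j) =
    (if j = k then (u ^ b) i l else 0) - (if l = i then (u ^ b) k j else 0) := by
  induction b generalizing i j with
  | zero =>
    have h : D (X (k, l)) ((1 : Matrix (Fin n) (Fin n) (MvPolynomial (Fin n × Fin n) ℂ)) i j)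
        = 0 := by
      rw [Matrix.one_apply]; split_ifs <;> simp
    rw [pow_zero, h]
    simp only [Matrix.one_apply]
    by_cases hjk : j = k <;> by_cases hli : l = i
    · subst hjk hli; simp
    · simp [hjk, hli, Ne.symm hli]
    · simp [hjk, hli, Ne.symm hjk]
    · simp [hjk, hli]
  | succ b ih =>
    rw [pow_succ, Matrix.mul_apply, map_sum]
    simp only [Derivation.leibniz, ih, hu, hgen, smul_eq_mul, Finset.sum_add_distrib, mul_sub,
      Finset.sum_sub_distrib, mul_ite, mul_zero, Finset.sum_ite_eq, Finset.sum_ite_eq',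
      Finset.mem_univ, if_true, Matrix.mul_apply]
    have hc : ∑ x, X (x, j) * (u ^ b) k x = ∑ x, (u ^ b) k x * X (x, j) :=
      Finset.sum_congr rfl fun x _ => mul_comm _ _
    split_ifs <;> simp only [hc, Finset.sum_const_zero] <;> ring

include hskew hgen hu in
/-- The Poisson bracket `{(u ^ a) i o, (u ^ b) k o}` of two entries of Krylov vectors. -/
lemma bracket_krylov (o i k : Fin n) (a b : ℕ) : D ((u ^ b) k o) ((u ^ a) i o) =
    ∑ s ∈ Finset.range a, ((u ^ (a - 1 - s)) k o * (u ^ (s + b)) i o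
      - (u ^ (a + b - 1 - s)) k o * (u ^ s) i o) := by
  induction a generalizing i with
  | zero =>
    rw [pow_zero, Matrix.one_apply]; split_ifs <;> simp
  | succ a ih =>
    have hstep : ∀ q, D ((u ^ b) k o) (u i q) =
        (if q = k then (u ^ b) i o else 0) - (if o = i then (u ^ b) k q else 0) := by
      intro q
      rw [hu, hskew, bracket_pow_gen D hgen u hu, neg_sub]
    rw [pow_succ', Matrix.mul_apply, map_sum]
    simp only [Derivation.leibniz, ih, hstep, smul_eq_mul, Finset.sum_add_distrib]
    rw [Finset.sum_range_succ']
    congr 1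
    · simp only [Finset.mul_sum]
      rw [Finset.sum_comm]
      refine Finset.sum_congr rfl fun s _ => ?_
      have e1 : a + 1 - 1 - (s + 1) = a - 1 - s := by omega
      have e2 : a + 1 + b - 1 - (s + 1) = a + b - 1 - s := by omega
      rw [e1, e2, add_right_comm s 1 b, pow_succ' u (s + b), pow_succ' u s, Matrix.mul_apply,
        Matrix.mul_apply, Finset.mul_sum, Finset.mul_sum, ← Finset.sum_sub_distrib]
      exact Finset.sum_congr rfl fun q _ => by ring
    · have e2 : a + 1 + b - 1 - 0 = b + a := by omega
      rw [e2, pow_add u b a, Matrix.mul_apply]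
      simp only [mul_sub, Finset.sum_sub_distrib, mul_ite, mul_zero, Finset.sum_ite_eq',
        Finset.mem_univ, if_true]
      by_cases h : o = i
      · subst h; simp [mul_comm]
      · have h' : i ≠ o := fun h' => h h'.symm
        simp [h, h']

/-- The submodule spanned by the Krylov vectors `uᵈ eₒ` with `d < e`. -/
noncomputable def krylovSpan (o : Fin n) (e : ℕ) :
    Submodule (MvPolynomial (Fin n × Fin n) ℂ) (Fin n → MvPolynomial (Fin n × Fin n) ℂ) :=
  Submodule.span _ {v | ∃ d < e, v = fun i => (u ^ d) i o}

/-- The square matrix with rows `ρ` of the Krylov vectors `u eₒ, …, uʳ eₒ`. -/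
noncomputable def krylovMat (o : Fin n) {r : ℕ} (ρ : Fin r → Fin n) :
    Matrix (Fin r) (Fin r) (MvPolynomial (Fin n × Fin n) ℂ) :=
  Matrix.of fun a b => (u ^ (b.val + 1)) (ρ a) o

/-- Replacing the column `u ^ (b + 1) eₒ` by a combination of lower Krylov vectors makes the minor
vanish: `eₒ` itself is zero on the rows `ρ`, and the others are already columns. -/
lemma cramer_krylovSpan (o : Fin n) {r : ℕ} (ρ : Fin r → Fin n) (hρ : ∀ a, ρ a ≠ o) (b : Fin r)
    (v : Fin n → MvPolynomial (Fin n × Fin n) ℂ) (hv : v ∈ krylovSpan u o (b.val + 1)) :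
    Matrix.cramer (krylovMat u o ρ) (fun a => v (ρ a)) b = 0 := by
  let L : (Fin n → MvPolynomial (Fin n × Fin n) ℂ) →ₗ[MvPolynomial (Fin n × Fin n) ℂ]
      MvPolynomial (Fin n × Fin n) ℂ :=
    LinearMap.proj b ∘ₗ Matrix.cramer (krylovMat u o ρ) ∘ₗ LinearMap.funLeft _ _ ρ
  have hle : krylovSpan u o (b.val + 1) ≤ LinearMap.ker L := by
    refine Submodule.span_le.2 ?_
    rintro _ ⟨d, hd, rfl⟩
    change Matrix.cramer (krylovMat u o ρ) (fun a => (u ^ d) (ρ a) o) b = 0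
    rw [Matrix.cramer_apply]
    rcases d with _ | d
    · refine Matrix.det_eq_zero_of_column_eq_zero b fun a => ?_
      simp [Matrix.one_apply, hρ a]
    · have hlt : d < r := by omega
      have hne : (⟨d, hlt⟩ : Fin r) ≠ b := by
        intro h; have := congrArg Fin.val h; simp at this; omega
      refine Matrix.det_zero_of_column_eq hne fun a => ?_
      rw [Matrix.updateCol_self, Matrix.updateCol_ne hne]
      rfl
  exact hle hv

include hskew hgen hu in
/-- Bracketing with a Krylov minor sends `uᵉ eₒ` to a combination of lower Krylov vectors, with
coefficients that do not depend on the row `i`. -/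
lemma bracket_minor_mem (o : Fin n) {r : ℕ} (ρ : Fin r → Fin n) (hρ : ∀ a, ρ a ≠ o) (e : ℕ) :
    (fun i => D ((u ^ e) i o) (krylovMat u o ρ).det) ∈ krylovSpan u o e := by
  have key : (fun i => D ((u ^ e) i o) (krylovMat u o ρ).det) =
      ∑ b : Fin r, ∑ s ∈ Finset.range (b.val + 1),
        Matrix.cramer (krylovMat u o ρ) (fun a => (u ^ (s + e)) (ρ a) o) b •
          fun i => (u ^ (b.val - s)) i o := by
    funext i
    rw [derivation_det_aux, Finset.sum_apply]
    refine Finset.sum_congr rfl fun b _ => ?_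
    have hcol : (fun a => D ((u ^ e) i o) (krylovMat u o ρ a b)) =
        ∑ s ∈ Finset.range (b.val + 1),
          ((u ^ (b.val - s)) i o • (fun a => (u ^ (s + e)) (ρ a) o)
            - (u ^ (b.val + e - s)) i o • (fun a => (u ^ s) (ρ a) o)) := by
      funext a
      rw [Finset.sum_apply]
      change D ((u ^ e) i o) ((u ^ (b.val + 1)) (ρ a) o) = _
      rw [bracket_krylov D hskew hgen u hu]
      refine Finset.sum_congr rfl fun s _ => ?_
      have e2 : b.val + 1 + e - 1 - s = b.val + e - s := by omega
      rw [e2]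
      rfl
    rw [hcol, map_sum, Finset.sum_apply, Finset.sum_apply]
    refine Finset.sum_congr rfl fun s hs => ?_
    have hz : Matrix.cramer (krylovMat u o ρ) (fun a => (u ^ s) (ρ a) o) b = 0 :=
      cramer_krylovSpan u o ρ hρ b (fun i => (u ^ s) i o)
        (Submodule.subset_span ⟨s, Finset.mem_range.1 hs, rfl⟩)
    simp only [map_sub, map_smul, Pi.sub_apply, Pi.smul_apply, smul_eq_mul, hz, mul_zero,
      sub_zero, mul_comm]
  rw [key]
  refine Submodule.sum_mem _ fun b _ => Submodule.sum_mem _ fun s hs => ?_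
  rw [Finset.mem_range] at hs
  by_cases hse : s + e ≤ b.val
  · have hz : Matrix.cramer (krylovMat u o ρ) (fun a => (u ^ (s + e)) (ρ a) o) b = 0 :=
      cramer_krylovSpan u o ρ hρ b (fun i => (u ^ (s + e)) i o)
        (Submodule.subset_span ⟨s + e, by omega, rfl⟩)
    rw [hz, zero_smul]
    exact Submodule.zero_mem _
  · exact Submodule.smul_mem _ _ (Submodule.subset_span ⟨b.val - s, by omega, rfl⟩)

include hskew hgen hu in
/-- Krylov minors on rows avoiding `o` Poisson commute, whatever the two row sets are. -/
lemma bracket_minor_minor (o : Fin n) {r r' : ℕ} (ρ : Fin r → Fin n) (hρ : ∀ a, ρ a ≠ o)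
    (ρ' : Fin r' → Fin n) (hρ' : ∀ a, ρ' a ≠ o) :
    D (krylovMat u o ρ').det (krylovMat u o ρ).det = 0 := by
  rw [derivation_det_aux]
  refine Finset.sum_eq_zero fun b _ => ?_
  refine cramer_krylovSpan u o ρ hρ b
    (fun i => D (krylovMat u o ρ').det ((u ^ (b.val + 1)) i o)) ?_
  have h := Submodule.neg_mem _ (bracket_minor_mem D hskew hgen u hu o ρ' hρ' (b.val + 1))
  convert h using 1
  funext i
  exact hskew _ _

include hskew hgen hu in
lemma bracket_casimir (m : ℕ) (f : MvPolynomial (Fin n × Fin n) ℂ) :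
    D (u.charpoly.coeff m) f = 0 := by
  have h : D (u.charpoly.coeff m) = 0 := by
    refine MvPolynomial.derivation_ext fun ⟨k, l⟩ => ?_
    rw [hskew, derivation_charpoly_coeff (D (X (k, l))) u (Matrix.single l k 1), neg_zero]
    · rfl
    ext1 i j
    rw [Matrix.map_apply, hu, hgen, Matrix.sub_apply, Matrix.mul_apply, Matrix.mul_apply]
    simp [Matrix.single_apply, ite_and, hu, Finset.sum_ite_eq, eq_comm]
  rw [h]; rfl

end Bracket

/-! ### Sums of principal minors -/

lemma mtxMinor_self {R : Type*} [CommRing R] {n : ℕ} (u : Matrix (Fin n) (Fin n) R)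
    (S : Finset (Fin n)) :
    mtxMinor u S S = (u.submatrix (Subtype.val : S → Fin n) (Subtype.val : S → Fin n)).det := by
  rw [mtxMinor, dif_pos rfl,
    ← Matrix.det_submatrix_equiv_self (S.orderIsoOfFin rfl).toEquiv]
  rfl

lemma sum_mtxMinor {R : Type*} [CommRing R] {n : ℕ} (u : Matrix (Fin n) (Fin n) R)
    (i : Fin n) : ∑ S ∈ Finset.univ.powersetCard (n - i.val), mtxMinor u S S =
      (-1) ^ (n - i.val) * u.charpoly.coeff i.val := by
  have h := Matrix.charpoly_coeff_eq_sum_minors u (n - i.val) (by simp)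
  have e : Fintype.card (Fin n) - (n - i.val) = i.val := by
    rw [Fintype.card_fin]; omega
  rw [e] at h
  rw [h, ← mul_assoc, ← mul_pow, neg_one_mul, neg_neg, one_pow, one_mul]
  exact Finset.sum_congr rfl fun S _ => mtxMinor_self u S


/-! ### Matrices with prescribed interval minors -/

/-- The solution of the recurrence `∑ a < N, c i a * f (i + a) + p i * f (i + N) = τ i` that
vanishes below `N`. -/
noncomputable def recSol {K : Type*} [Field K] (N : ℕ) (c : ℕ → Fin N → K) (p τ : ℕ → K) : ℕ → K
  | m => if _h : m < N then 0 else
      (τ (m - N) - ∑ a : Fin N, c (m - N) a * recSol N c p τ (m - N + a.val)) / p (m - N)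
termination_by m => m
decreasing_by have := a.isLt; omega

lemma recSol_spec {K : Type*} [Field K] (N : ℕ) (c : ℕ → Fin N → K) (p τ : ℕ → K)
    (hp : ∀ i, p i ≠ 0) (i : ℕ) :
    ∑ a : Fin N, c i a * recSol N c p τ (i + a.val) + p i * recSol N c p τ (i + N) = τ i := by
  conv_lhs => enter [2]; rw [recSol]
  rw [dif_neg (by omega), Nat.add_sub_cancel, mul_div_cancel₀ _ (hp i)]
  ring

/-- The minors on an interval of rows and the initial columns can be prescribed arbitrarily: the
minor on rows `i, …, i + r - 1` is affine in its bottom right entry, with slope the minor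
of size `r - 1` on rows `i, …, i + r - 2`. -/
lemma exists_interval_minors {K : Type*} [Field K] (t : ℕ → ℕ → K) (ht : ∀ i r, t i r ≠ 0)
    (h0 : ∀ i, t i 0 = 1) (N : ℕ) : ∃ w : ℕ → ℕ → K, ∀ r ≤ N, ∀ i,
      Matrix.det (Matrix.of fun a b : Fin r => w (i + a.val) b.val) = t i r := by
  induction N with
  | zero =>
    refine ⟨fun _ _ => 0, fun r hr i => ?_⟩
    obtain rfl : r = 0 := by omega
    rw [Matrix.det_isEmpty, h0]
  | succ N ih =>
    obtain ⟨w, hw⟩ := ih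
    let c : ℕ → Fin N → K := fun i a => (-1) ^ (a.val + N) *
      Matrix.det (Matrix.of fun x y : Fin N => w (i + ((Fin.castSucc a).succAbove x).val) y.val)
    let f := recSol N c (fun i => t i N) (fun i => t i (N + 1))
    refine ⟨fun a b => if b = N then f a else w a b, fun r hr i => ?_⟩
    rcases Nat.lt_or_ge r (N + 1) with h | h
    · rw [← hw r (by omega) i]
      congr 1
      ext a b
      have hb : b.val ≠ N := by have := b.isLt; omega
      simp [hb]
    · obtain rfl : r = N + 1 := by omega
      have hrec := recSol_spec N c (fun i => t i N) (fun i => t i (N + 1)) (fun i => ht i N) i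
      rw [← hrec, Matrix.det_succ_column _ (Fin.last N), Fin.sum_univ_castSucc]
      have hne : ∀ y : Fin N, y.val ≠ N := fun y => y.isLt.ne
      congr 1
      · refine Finset.sum_congr rfl fun a _ => ?_
        simp only [c, f, Matrix.of_apply, Matrix.submatrix, Fin.succAbove_last, Fin.val_last,
          Fin.val_castSucc, if_true, hne, if_false]
        ring
      · rw [← hw N le_rfl i]
        simp only [f, Matrix.of_apply, Matrix.submatrix, Fin.succAbove_last, Fin.val_last,
          Fin.val_castSucc, if_true, hne, if_false]
        rw [← two_mul, pow_mul, neg_one_sq, one_pow, one_mul, mul_comm]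

/-! ### Matrices with prescribed Krylov vectors and characteristic polynomial -/

lemma exists_companion {K : Type*} [Field K] {n : ℕ} (f : Polynomial K) (hf : f.Monic)
    (hn : f.natDegree = n) : ∃ C : Matrix (Fin n) (Fin n) K, C.charpoly = f ∧
      ∀ (o m q : Fin n), o.val = 0 → (C ^ m.val) q o = if q = m then 1 else 0 := by
  obtain ⟨pb, hmin, hdim⟩ : ∃ pb : PowerBasis K (AdjoinRoot f),
      minpoly K pb.gen = f ∧ pb.dim = n := by
    refine ⟨AdjoinRoot.powerBasis' hf, ?_, hn⟩
    change minpoly K (AdjoinRoot.root f) = f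
    rw [AdjoinRoot.minpoly_root hf.ne_zero, hf.leadingCoeff, inv_one, map_one, mul_one]
  subst hdim
  refine ⟨Algebra.leftMulMatrix pb.basis pb.gen, ?_, fun o m q ho => ?_⟩
  · rw [charpoly_leftMulMatrix, hmin]
  · have h1 : pb.basis o = 1 := by rw [pb.basis_eq_pow, ho, pow_zero]
    have h2 : pb.gen ^ m.val = pb.basis m := (pb.basis_eq_pow m).symm
    rw [← map_pow, Algebra.leftMulMatrix_eq_repr_mul, h1, mul_one, h2, Module.Basis.repr_self, Finsupp.single_apply]
    simp only [eq_comm]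

/-- There is a matrix with a given monic characteristic polynomial and given Krylov vectors
`u eₒ, …, u ^ (n - 1) eₒ`, provided that these and `eₒ` are independent: conjugate the companion
matrix by the matrix `g` of these vectors. -/
lemma exists_krylov {K : Type*} [Field K] {n : ℕ} (o : Fin n) (ho : o.val = 0)
    (f : Polynomial K) (hf : f.Monic) (hn : f.natDegree = n) (g : Matrix (Fin n) (Fin n) K)
    (hg : IsUnit g.det) (hgo : ∀ i, g i o = if i = o then 1 else 0) :
    ∃ u : Matrix (Fin n) (Fin n) K, u.charpoly = f ∧
      ∀ i m : Fin n, (u ^ m.val) i o = g i m := by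
  obtain ⟨C, hC, hCm⟩ := exists_companion f hf hn
  obtain ⟨g, rfl⟩ := (Matrix.isUnit_iff_isUnit_det g).2 hg
  refine ⟨g.val * C * g.inv, ?_, fun i m => ?_⟩
  · have hinv : g.inv = (g.val)⁻¹ := Matrix.coe_units_inv g
    rw [hinv, Matrix.charpoly_units_conj, hC]
  · have hpow : (g.val * C * g.inv) ^ m.val * g.val = g.val * C ^ m.val := by
      have h := Units.conj_pow g C m.val
      change (g.val * C * (g⁻¹).val) ^ m.val * g.val = _
      rw [h, mul_assoc, Units.inv_mul, mul_one]
    have h := congrFun (congrFun hpow i) o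
    rw [Matrix.mul_apply, Matrix.mul_apply] at h
    simpa [hgo, hCm o m _ ho] using h

/-- Some matrix over a purely transcendental extension of `ℂ` gives the interval Krylov minors and
the coefficients of the characteristic polynomial independent values. -/
lemma exists_generic_matrix {n : ℕ} (hn : 1 ≤ n) {K : Type*} [Field K]
    (t : ℕ → ℕ → K) (ht : ∀ i r, t i r ≠ 0) (h0 : ∀ i, t i 0 = 1) (c : Fin n → K) :
    ∃ u : Matrix (Fin n) (Fin n) K,
      (∀ i : Fin n, u.charpoly.coeff i.val = c i) ∧
      ∀ (r i : ℕ), 1 ≤ i → ∀ hr : i + r ≤ n,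
        Matrix.det (Matrix.of fun a b : Fin r =>
          (u ^ (b.val + 1)) ⟨i + a.val, by have := a.isLt; omega⟩ ⟨0, hn⟩) = t i r := by
  obtain ⟨w, hw⟩ := exists_interval_minors t ht h0 n
  obtain ⟨m, rfl⟩ : ∃ m, n = m + 1 := ⟨n - 1, by omega⟩
  let g : Matrix (Fin (m + 1)) (Fin (m + 1)) K := Matrix.of fun i j =>
    if j.val = 0 then (if i = 0 then 1 else 0) else w i.val (j.val - 1)
  have hdet : g.det = t 1 m := by
    rw [Matrix.det_succ_column_zero, Fin.sum_univ_succ, ← hw m (by omega) 1]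
    simp [g, Matrix.submatrix, add_comm]
  let p : Polynomial K := ∑ i : Fin (m + 1), Polynomial.C (c i) * Polynomial.X ^ i.val
  have hp : p.degree < ((m + 1 : ℕ) : WithBot ℕ) := Polynomial.degree_sum_fin_lt c
  have hf : (Polynomial.X ^ (m + 1) + p).Monic := Polynomial.monic_X_pow_add hp
  have hfn : (Polynomial.X ^ (m + 1) + p).natDegree = m + 1 := by
    refine Polynomial.natDegree_eq_of_degree_eq_some ?_
    rw [Polynomial.degree_add_eq_left_of_degree_lt (by rwa [Polynomial.degree_X_pow]),
      Polynomial.degree_X_pow]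
  obtain ⟨u, hu, huk⟩ := exists_krylov 0 rfl _ hf hfn g
    (by rw [hdet]; exact (ht 1 m).isUnit) (fun i => by simp [g])
  refine ⟨u, fun i => ?_, fun r i hi hr => ?_⟩
  · rw [hu, Polynomial.coeff_add, Polynomial.coeff_X_pow, if_neg i.isLt.ne, zero_add,
      Polynomial.finsetSum_coeff]
    simp [Polynomial.coeff_C_mul, Polynomial.coeff_X_pow, Fin.val_inj]
  · rw [← hw r (by omega) i]
    congr 1
    ext a b
    have hb : b.val + 1 < m + 1 := by have := b.isLt; omega
    have h := huk ⟨i + a.val, by have := a.isLt; omega⟩ ⟨b.val + 1, hb⟩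
    simp only [Matrix.of_apply]
    exact h.trans (by simp [g])


/-- for the Kirillov–Kostant–Souriau bracket of `gl(n,ℂ)` on
`ℂ[u_{ab}]`, the family consisting of the minors `F_{p,i}` of the Krylov
matrix `[u·e₁ | ⋯ | u^{n−p−1}·e₁]` on rows `i+1,…,n−p+i−1` (for
`0 ≤ p ≤ n−2`, `1 ≤ i ≤ p+1`), together with the sums `G_i` of all principal
`(n−i)×(n−i)` minors of `u` (for `0 ≤ i ≤ n−1`), is pairwise Poisson
commuting and algebraically independent over `ℂ`: a polynomial integrable
system on `gl(n,ℂ)*`. -/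
theorem gl_n_polynomial_integrable_system
    (n : ℕ) (hn : 1 ≤ n)
    (P : MvPolynomial (Fin n × Fin n) ℂ → MvPolynomial (Fin n × Fin n) ℂ →
      MvPolynomial (Fin n × Fin n) ℂ)
    (hadd : ∀ a b c, P (a + b) c = P a c + P b c)
    (hsmul : ∀ (r : ℂ) (a b), P (r • a) b = r • P a b)
    (hskew : ∀ a b, P a b = - P b a)
    (hleib : ∀ a b c, P (a * b) c = a * P b c + b * P a c)
    (hgen : ∀ i j k l : Fin n, P (X (i, j)) (X (k, l)) =
      (if j = k then X (i, l) else 0) - (if l = i then X (k, j) else 0))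
    (u : Matrix (Fin n) (Fin n) (MvPolynomial (Fin n × Fin n) ℂ))
    (hu : ∀ a b, u a b = X (a, b))
    (Fam : {pi : ℕ × ℕ // pi.1 + 2 ≤ n ∧ 1 ≤ pi.2 ∧ pi.2 ≤ pi.1 + 1} ⊕ Fin n →
      MvPolynomial (Fin n × Fin n) ℂ)
    (hFamF : ∀ q : {pi : ℕ × ℕ // pi.1 + 2 ≤ n ∧ 1 ≤ pi.2 ∧ pi.2 ≤ pi.1 + 1},
      Fam (Sum.inl q) =
        Matrix.det (Matrix.of fun a b : Fin (n - q.val.1 - 1) =>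
          (u ^ (b.val + 1))
            ⟨q.val.2 + a.val, by have h1 := q.2; have h2 := a.isLt; omega⟩
            ⟨0, hn⟩))
    (hFamG : ∀ i : Fin n,
      Fam (Sum.inr i) =
        ∑ S ∈ Finset.univ.powersetCard (n - i.val), mtxMinor u S S) :
    (∀ a b, P (Fam a) (Fam b) = 0) ∧ AlgebraicIndependent ℂ Fam := by
  constructor
  · let D : MvPolynomial (Fin n × Fin n) ℂ →
        Derivation ℂ (MvPolynomial (Fin n × Fin n) ℂ) (MvPolynomial (Fin n × Fin n) ℂ) := fun c =>
      Derivation.mk' { toFun := fun a => P a c, map_add' := fun a b => hadd a b c,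
                       map_smul' := fun r a => hsmul r a c } (fun a b => hleib a b c)
    have hD : ∀ a c, D c a = P a c := fun _ _ => rfl
    have hDskew : ∀ a c, D c a = - D a c := fun a c => hskew a c
    have hDgen : ∀ i j k l : Fin n, D (X (k, l)) (X (i, j)) =
      (if j = k then X (i, l) else 0) - (if l = i then X (k, j) else 0) := hgen
    have hcas : ∀ (i : Fin n) f, P f (Fam (Sum.inr i)) = 0 := by
      intro i f
      rw [hskew, ← hD, hDskew, neg_neg, hFamG, sum_mtxMinor, hDskew, Derivation.leibniz,
        hDskew, bracket_casimir D hDskew hDgen u hu]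
      have h1 : D f ((-1) ^ (n - i.val)) = 0 := by
        simp [Derivation.leibniz_pow]
      simp [h1]
    rintro (q | i) (q' | i')
    · rw [hFamF, hFamF, ← hD]
      have hne : ∀ q : {pi : ℕ × ℕ // pi.1 + 2 ≤ n ∧ 1 ≤ pi.2 ∧ pi.2 ≤ pi.1 + 1},
          ∀ a : Fin (n - q.val.1 - 1), (⟨q.val.2 + a.val, by
            have h1 := q.2; have h2 := a.isLt; omega⟩ : Fin n) ≠ ⟨0, hn⟩ := by
        intro q a h
        have h1 := congrArg Fin.val h
        have h2 := q.2
        simp only at h1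
        omega
      exact bracket_minor_minor D hDskew hDgen u hu ⟨0, hn⟩ _ (hne q) _ (hne q')
    · exact hcas _ _
    · rw [hskew, hcas, neg_zero]
    · exact hcas _ _
  · let ι := {pi : ℕ × ℕ // pi.1 + 2 ≤ n ∧ 1 ≤ pi.2 ∧ pi.2 ≤ pi.1 + 1} ⊕ Fin n
    let K := FractionRing (MvPolynomial ι ℂ)
    have hinj : Function.Injective (algebraMap (MvPolynomial ι ℂ) K) :=
      IsFractionRing.injective _ _
    let y : ι → K := fun q => algebraMap (MvPolynomial ι ℂ) K (X q)
    have hy : AlgebraicIndependent ℂ y :=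
      (MvPolynomial.algebraicIndependent_X ι ℂ).map' (f := IsScalarTower.toAlgHom ℂ _ K) hinj
    -- The prescribed minor on rows `i, …, i + r - 1`; indices outside the family get the value `1`.
    let t : ℕ → ℕ → K := fun i r =>
      if h : 1 ≤ r ∧ r + 1 ≤ n ∧ 1 ≤ i ∧ i + r ≤ n then
        y (Sum.inl ⟨(n - r - 1, i), by simp only; omega⟩) else 1
    have ht : ∀ i r, t i r ≠ 0 := by
      intro i r
      simp only [t]
      split_ifs with h
      · exact hy.ne_zero _
      · exact one_ne_zero
    have h0 : ∀ i, t i 0 = 1 := fun i => dif_neg (by omega)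
    obtain ⟨v, hvc, hvm⟩ := exists_generic_matrix hn t ht h0
      (fun i => (-1) ^ (n - i.val) * y (Sum.inr i))
    let φ : MvPolynomial (Fin n × Fin n) ℂ →ₐ[ℂ] K := MvPolynomial.aeval fun ab => v ab.1 ab.2
    have hφu : u.map φ = v := by
      ext a b
      simp [φ, hu]
    have hφpow : ∀ (m : ℕ) (i j : Fin n), φ ((u ^ m) i j) = (v ^ m) i j := by
      intro m i j
      rw [← hφu]
      exact congrFun (congrFun (Matrix.map_pow u φ.toRingHom m) i) j
    refine AlgebraicIndependent.of_comp φ ?_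
    have hcomp : φ ∘ Fam = y := by
      funext q
      rcases q with q | i
      · have hq := q.2
        rw [Function.comp_apply, hFamF, AlgHom.map_det]
        have h1 := hvm (n - q.val.1 - 1) q.val.2 (by omega) (by omega)
        have h2 : t q.val.2 (n - q.val.1 - 1) = y (Sum.inl q) := by
          simp only [t]
          rw [dif_pos (by omega)]
          congr 2
          ext
          · simp only; omega
          · rfl
        rw [← h2, ← h1]
        congr 1
        ext a b
        exact hφpow _ _ _
      · rw [Function.comp_apply, hFamG, sum_mtxMinor, map_mul, map_pow, map_neg, map_one]
        have h1 : φ (u.charpoly.coeff i.val) = v.charpoly.coeff i.val := by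
          rw [← hφu]
          have h2 := Matrix.charpoly_map u φ.toRingHom
          have h3 := congrArg (fun p => Polynomial.coeff p i.val) h2
          simp only [Polynomial.coeff_map] at h3
          exact h3.symm
        rw [h1, hvc, ← mul_assoc, ← mul_pow, neg_one_mul, neg_neg, one_pow, one_mul]
    rw [hcomp]
    exact hy
end

section
/- Let R be a commutative ring, n ≥ 2, and u a strictly lower triangular n×n matrix over R (u_{ab} = 0 whenever a ≤ b). Let u′ be the (n−1)×(n−1) top-left corner submatrix of u (rows and columns 1,…,n−1). Then for all i ∈ {1,…,n−1} and p ∈ {0,…,n−2} with i ≤ p, the determinant of the matrix obtained from [u·e₁ | u²·e₁ | ⋯ | u^{n−p−1}·e₁] by keeping only the rows i+1,…,n−p+i−1 equals the determinant of the matrix obtained from [u′·e₁′ | (u′)²·e₁′ | ⋯ | (u′)^{n−p−1}·e₁′] by keeping only the rows i+1,…,n−p+i−1, where e₁ ∈ R^n and e₁′ ∈ R^{n−1} are the first standard basis column vectors. In particular this determinant does not involve the entries u_{n,1},…,u_{n,n−1} of the last row of u. -/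
/-!
If the rows `a < m` of a matrix `u` of size `m + 1` vanish in the last column, then `u` is block
lower triangular with upper left block `u'` of size `m`, so the upper left block of `u ^ k` is
`u' ^ k`. Since `i ≤ p`, the rows of the minor stop before the last row of `u`, so all its entries
lie in this block and the two matrices agree entry by entry.
-/

/-- Taking powers commutes with passing to the upper left corner of a block lower triangular
matrix whose lower right block is `1 × 1`. -/
lemma pow_castSucc_apply_of_last_col {R : Type*} [CommRing R] {m : ℕ}
    (u : Matrix (Fin (m + 1)) (Fin (m + 1)) R) (u' : Matrix (Fin m) (Fin m) R)
    (hu : ∀ a : Fin m, u a.castSucc (Fin.last m) = 0)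
    (hu' : ∀ a b : Fin m, u' a b = u a.castSucc b.castSucc) (k : ℕ) (x y : Fin m) :
    (u ^ k) x.castSucc y.castSucc = (u' ^ k) x y := by
  induction k generalizing x with
  | zero => simp [Matrix.one_apply]
  | succ k ih =>
    rw [pow_succ', pow_succ', Matrix.mul_apply, Matrix.mul_apply, Fin.sum_univ_castSucc]
    simp [hu, hu', ih]


/-- for a strictly lower triangular `n×n` matrix `u`, with
`u′` its top-left `(n−1)×(n−1)` corner, and `1 ≤ i ≤ n−1`, `0 ≤ p ≤ n−2`,
`i ≤ p`, the minor of `[u·e₁ | ⋯ | u^{n−p−1}·e₁]` on rows `i+1,…,n−p+i−1`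
(1-based; 0-based rows `i,…,n−p+i−2`) equals the corresponding minor of
`[u′·e₁′ | ⋯ | (u′)^{n−p−1}·e₁′]`; in particular it does not involve the
last row of `u`. -/
theorem lowest_degree_cluster_minor_reduction
    {R : Type*} [CommRing R] (n : ℕ) (hn : 2 ≤ n)
    (u : Matrix (Fin n) (Fin n) R)
    (hu : ∀ a b : Fin n, a ≤ b → u a b = 0)
    (u' : Matrix (Fin (n - 1)) (Fin (n - 1)) R)
    (hu' : ∀ a b : Fin (n - 1), u' a b =
      u ⟨a.val, by have := a.isLt; omega⟩ ⟨b.val, by have := b.isLt; omega⟩)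
    (i p : ℕ) (hi1 : 1 ≤ i) (hi2 : i ≤ n - 1) (hp : p ≤ n - 2) (hip : i ≤ p) :
    Matrix.det (Matrix.of fun a b : Fin (n - p - 1) =>
      (u ^ (b.val + 1)) ⟨i + a.val, by have := a.isLt; omega⟩ ⟨0, by omega⟩) =
    Matrix.det (Matrix.of fun a b : Fin (n - p - 1) =>
      (u' ^ (b.val + 1)) ⟨i + a.val, by have := a.isLt; omega⟩ ⟨0, by omega⟩) := by
  obtain ⟨m, rfl⟩ : ∃ m, n = m + 1 := ⟨n - 1, by omega⟩
  congr 1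
  ext a b
  have ha := a.isLt
  exact pow_castSucc_apply_of_last_col u u' (fun a => hu _ _ (Fin.le_last _)) hu' (b.val + 1)
    ⟨i + a.val, by omega⟩ ⟨0, by omega⟩
end
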